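/- arXiv:1705.06194 — 9 statements merged into one kernel-verified Lean document; each statement's English description precedes it below -/
import Mathlib

section
/- Let F be a subset of ℝ which is not always of 1st category, i.e., there exists a perfect set P ⊆ ℝ such that F ∩ P is non-meager in the subspace topology of P. Then F can be written as the union of two disjoint subsets F₁ and F₂ such that there is no Borel set B ⊆ ℝ with F₁ ⊆ B and B ∩ F₂ = ∅. -/
/-!
Suppose every subset of a non-meagre set `F` is the trace on `F` of a set with the Baire property.
Well-order the space and shrink `F` so that all its proper initial segments are meagre. For every
`x ∈ F`, all but a meagre set of `y` then satisfy `y ∉ F ∨ x ≤ y`. If this relation had the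
Baire property in the square, the Kuratowski–Ulam theorem would allow exchanging the quantifiers,
giving a `y ∈ F` with `x ≤ y` for all but a meagre set of `x ∈ F`. As `y` has only a meagre set of
predecessors in `F`, and points are meagre, `F` would be meagre. The assumption on `F` replaces the
Baire property in the square: it makes any family of open sets `D x`, `x ∈ F`, agree outside a
meagre set of `x` with the sections of one open set.
-/

open Set Filter Topology TopologicalSpace

section Residual

variable {X Y : Type*} [TopologicalSpace X] [TopologicalSpace Y]

theorem exists_seq_isOpen_dense_iInter_subset {s : Set X} (hs : s ∈ residual X) :
    ∃ D : ℕ → Set X, (∀ n, IsOpen (D n) ∧ Dense (D n)) ∧ ⋂ n, D n ⊆ s := by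
  obtain ⟨S, hSo, hSd, hSc, hSs⟩ := mem_residual_iff.1 hs
  obtain ⟨D, hD⟩ := (hSc.insert univ).exists_eq_range (insert_nonempty _ _)
  have hmem : ∀ t ∈ insert univ S, IsOpen t ∧ Dense t :=
    forall_mem_insert.2 ⟨⟨isOpen_univ, dense_univ⟩, fun t ht => ⟨hSo t ht, hSd t ht⟩⟩
  refine ⟨D, fun n => hmem _ (hD ▸ mem_range_self n), ?_⟩
  rw [← sInter_range, ← hD]
  exact (sInter_subset_sInter (subset_insert _ _)).trans hSs

theorem isMeagre_singleton_of_neBot [T1Space X] (x : X) [NeBot (𝓝[≠] x)] :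
    IsMeagre ({x} : Set X) :=
  residual_of_dense_open isOpen_compl_singleton (dense_compl_singleton x)

theorem perfectSpace_coe_of_preperfect {P : Set X} (hP : Preperfect P) : PerfectSpace P := by
  refine ⟨fun x _ => accPt_iff_nhds.2 fun V hV => ?_⟩
  obtain ⟨U, hU, hUV⟩ := mem_nhds_subtype P x V |>.1 hV
  obtain ⟨y, ⟨hyU, hyP⟩, hyx⟩ := accPt_iff_nhds.1 (hP x x.2) U hU
  exact ⟨⟨y, hyP⟩, ⟨hUV hyU, mem_univ _⟩, fun h => hyx (congrArg Subtype.val h)⟩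

theorem neBot_residual_inf_principal_iff {s : Set X} :
    NeBot (residual X ⊓ 𝓟 s) ↔ ¬ IsMeagre s := by
  rw [neBot_iff, Ne, ← disjoint_iff, disjoint_principal_right, IsMeagre]

/-- The Kuratowski–Ulam theorem for a dense open set. -/
theorem eventually_residual_dense_section [SecondCountableTopology X] {W : Set (X × Y)}
    (hWo : IsOpen W) (hWd : Dense W) : ∀ᶠ y in residual Y, Dense ((·, y) ⁻¹' W) := by
  have hB := isBasis_countableBasis X
  have hproj : ∀ V ∈ countableBasis X, V.Nonempty →
      ∀ᶠ y in residual Y, ∃ x ∈ V, (x, y) ∈ W := by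
    intro V hV hVne
    have hVo := hB.isOpen hV
    have himage : Prod.snd '' (W ∩ V ×ˢ univ) = {y | ∃ x ∈ V, (x, y) ∈ W} := by
      ext y
      simp [and_comm]
    rw [Filter.Eventually, ← himage]
    refine residual_of_dense_open (isOpenMap_snd _ (hWo.inter (hVo.prod isOpen_univ))) ?_
    refine dense_iff_inter_open.2 fun T hTo hTne => ?_
    obtain ⟨p, ⟨hpV, hpT⟩, hpW⟩ := hWd.inter_open_nonempty _ (hVo.prod hTo) (hVne.prod hTne)
    exact ⟨p.2, hpT, p, ⟨hpW, hpV, mem_univ _⟩, rfl⟩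
  have hall : ∀ᶠ y in residual Y, ∀ V ∈ countableBasis X, V.Nonempty → ∃ x ∈ V, (x, y) ∈ W := by
    refine (eventually_countable_ball (countable_countableBasis X)).2 fun V hV => ?_
    exact eventually_imp_distrib_left.2 (hproj V hV)
  filter_upwards [hall] with y hy
  exact hB.dense_iff.2 hy

theorem dense_union_compl_closure_prod {C : Set X} {O : Set (X × Y)}
    (hO : ∀ x ∈ C, Dense (Prod.mk x ⁻¹' O)) : Dense (O ∪ (closure C)ᶜ ×ˢ univ) := by
  refine (isTopologicalBasis_opens.prod isTopologicalBasis_opens).dense_iff.2 ?_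
  rintro _ ⟨U, hU, V, hV, rfl⟩ ⟨⟨x, y⟩, hx, hy⟩
  by_cases hxC : x ∈ closure C
  · obtain ⟨x', hx'U, hx'C⟩ := mem_closure_iff.1 hxC U hU hx
    obtain ⟨y', hy'V, hy'O⟩ := (hO x' hx'C).inter_open_nonempty V hV ⟨y, hy⟩
    exact ⟨(x', y'), ⟨hx'U, hy'V⟩, .inl hy'O⟩
  · exact ⟨(x, y), ⟨hx, hy⟩, .inr ⟨hxC, mem_univ y⟩⟩

end Residual

section Exchange

variable {X Y : Type*} [TopologicalSpace X] [TopologicalSpace Y]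
  {l : Filter X} [CountableInterFilter l]

theorem exists_isOpen_eventually_section_eq [SecondCountableTopology Y]
    (hl : ∀ A : Set X, ∃ U, IsOpen U ∧ A =ᶠ[l] U) {D : X → Set Y}
    (hD : ∀ᶠ x in l, IsOpen (D x)) :
    ∃ O : Set (X × Y), IsOpen O ∧ ∀ᶠ x in l, Prod.mk x ⁻¹' O = D x := by
  have hB := isBasis_countableBasis Y
  choose U hUo hU using fun V : Set Y => hl {x | V ⊆ D x}
  refine ⟨⋃ V ∈ countableBasis Y, U V ×ˢ V,
    isOpen_biUnion fun V hV => (hUo V).prod (hB.isOpen hV), ?_⟩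
  have hUall : ∀ᶠ x in l, ∀ V ∈ countableBasis Y, V ⊆ D x ↔ x ∈ U V :=
    (eventually_countable_ball (countable_countableBasis Y)).2 fun V _ => (hU V).mem_iff
  filter_upwards [hD, hUall] with x hxo hxU
  ext y
  simp only [mem_preimage, mem_iUnion, mem_prod, exists_prop]
  constructor
  · rintro ⟨V, hV, hxV, hy⟩
    exact (hxU V hV).2 hxV hy
  · intro hy
    obtain ⟨V, hV, hyV, hVD⟩ := hB.exists_subset_of_mem_open hy hxo
    exact ⟨V, hV, (hxU V hV).1 hVD, hyV⟩

variable [SecondCountableTopology X] [SecondCountableTopology Y]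

theorem eventually_residual_eventually_mem_of_isOpen_of_dense (hlr : l ≤ residual X)
    (hl : ∀ A : Set X, ∃ U, IsOpen U ∧ A =ᶠ[l] U) {D : X → Set Y}
    (hD : ∀ᶠ x in l, IsOpen (D x) ∧ Dense (D x)) :
    ∀ᶠ y in residual Y, ∀ᶠ x in l, y ∈ D x := by
  obtain ⟨O, hO, hOD⟩ := exists_isOpen_eventually_section_eq hl (hD.mono fun _ => And.left)
  set C : Set X := {x | Prod.mk x ⁻¹' O = D x ∧ Dense (D x)}
  have hC : C ∈ l := hOD.and (hD.mono fun _ => And.right)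
  -- Adjoining the part over `(closure C)ᶜ` makes `O` dense and leaves its sections over `C` intact.
  have hdense : Dense (O ∪ (closure C)ᶜ ×ˢ univ) :=
    dense_union_compl_closure_prod fun x hx => hx.1 ▸ hx.2
  have hopen : IsOpen (O ∪ (closure C)ᶜ ×ˢ (univ : Set Y)) :=
    hO.union (isClosed_closure.isOpen_compl.prod isOpen_univ)
  filter_upwards [eventually_residual_dense_section hopen hdense] with y hy
  have hsection := hlr (residual_of_dense_open (hopen.preimage (by fun_prop)) hy)
  filter_upwards [hsection, hC] with x hxy hxC
  have hxO : (x, y) ∈ O := hxy.resolve_right fun h => h.1 (subset_closure hxC)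
  exact hxC.1.subset hxO

theorem eventually_residual_eventually_comm (hlr : l ≤ residual X)
    (hl : ∀ A : Set X, ∃ U, IsOpen U ∧ A =ᶠ[l] U) {R : X → Y → Prop}
    (hR : ∀ᶠ x in l, ∀ᶠ y in residual Y, R x y) :
    ∀ᶠ y in residual Y, ∀ᶠ x in l, R x y := by
  choose! D hD hDR using fun x (hx : {y | R x y} ∈ residual Y) =>
    exists_seq_isOpen_dense_iInter_subset hx
  have hmem : ∀ n, ∀ᶠ y in residual Y, ∀ᶠ x in l, y ∈ D x n := fun n =>
    eventually_residual_eventually_mem_of_isOpen_of_dense hlr hl (hR.mono fun x hx => hD x hx n)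
  filter_upwards [eventually_countable_forall.2 hmem] with y hy
  filter_upwards [eventually_countable_forall.2 hy, hR] with x hxy hx
  exact hDR x hx (mem_iInter.2 hxy)

end Exchange

section Nonseparation

variable {X : Type*} [TopologicalSpace X]

theorem exists_subset_not_isMeagre_forall_isMeagre_inter_Iio [LinearOrder X] [WellFoundedLT X]
    {F : Set X} (hF : ¬ IsMeagre F) :
    ∃ G ⊆ F, ¬ IsMeagre G ∧ ∀ x ∈ G, IsMeagre (G ∩ Iio x) := by
  by_cases hseg : ∀ x ∈ F, IsMeagre (F ∩ Iio x)
  · exact ⟨F, Subset.rfl, hF, hseg⟩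
  push Not at hseg
  obtain ⟨a, ⟨-, ha⟩, hmin⟩ :=
    wellFounded_lt.has_min {x | x ∈ F ∧ ¬ IsMeagre (F ∩ Iio x)} hseg
  refine ⟨F ∩ Iio a, inter_subset_left, ha, fun x hx => ?_⟩
  have hxseg : IsMeagre (F ∩ Iio x) := by
    by_contra h
    exact hmin x ⟨hx.1, h⟩ hx.2
  exact hxseg.mono (inter_subset_inter_left _ inter_subset_left)

variable [SecondCountableTopology X]

theorem exists_forall_isOpen_not_eventuallyEq_of_isMeagre_inter_Iio [LinearOrder X] {F : Set X}
    (hF : ¬ IsMeagre F) (hpt : ∀ x ∈ F, IsMeagre {x}) (hseg : ∀ x ∈ F, IsMeagre (F ∩ Iio x)) :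
    ∃ A : Set X, ∀ U, IsOpen U → ¬ A =ᶠ[residual X ⊓ 𝓟 F] U := by
  by_contra! hopen
  have : NeBot (residual X ⊓ 𝓟 F) := neBot_residual_inf_principal_iff.2 hF
  have hmemF : ∀ᶠ x in residual X ⊓ 𝓟 F, x ∈ F := mem_inf_of_right (mem_principal_self F)
  have hswap : ∀ᶠ y in residual X, ∀ᶠ x in residual X ⊓ 𝓟 F, y ∉ F ∩ Iio x :=
    eventually_residual_eventually_comm inf_le_left hopen (hmemF.mono hseg)
  obtain ⟨y, hy, hyF⟩ := ((hswap.filter_mono inf_le_left).and hmemF).exists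
  have hlt : ∀ᶠ x in residual X ⊓ 𝓟 F, x ∉ F ∩ Iio y := mem_inf_of_left (hseg y hyF)
  have hne : ∀ᶠ x in residual X ⊓ 𝓟 F, x ≠ y := mem_inf_of_left (hpt y hyF)
  obtain ⟨x, hyx, hxF, hxy, hxne⟩ := (hy.and (hmemF.and (hlt.and hne))).exists
  rcases lt_trichotomy x y with h | h | h
  · exact hxy ⟨hxF, h⟩
  · exact hxne h
  · exact hyx ⟨hyF, h⟩

theorem exists_subset_forall_baireMeasurableSet_inter_ne {F : Set X} (hF : ¬ IsMeagre F)
    (hpt : ∀ x ∈ F, IsMeagre {x}) :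
    ∃ A ⊆ F, ∀ B, BaireMeasurableSet B → F ∩ B ≠ A := by
  obtain ⟨_, _⟩ := exists_wellFoundedLT X
  obtain ⟨G, hGF, hG, hseg⟩ := exists_subset_not_isMeagre_forall_isMeagre_inter_Iio hF
  obtain ⟨A, hA⟩ := exists_forall_isOpen_not_eventuallyEq_of_isMeagre_inter_Iio hG
    (fun x hx => hpt x (hGF hx)) hseg
  refine ⟨G ∩ A, inter_subset_left.trans hGF, fun B hB hBA => ?_⟩
  obtain ⟨U, hU, hBU⟩ := hB.residualEq_isOpen
  have hAB : A =ᶠ[𝓟 G] B := by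
    refine eventuallyEq_set.2 (eventually_principal.2 fun x hx => ?_)
    have hxBA : x ∈ F ∩ B ↔ x ∈ G ∩ A := by rw [hBA]
    simpa only [mem_inter_iff, hGF hx, hx, true_and] using hxBA.symm
  exact hA U hU ((hAB.filter_mono inf_le_right).trans (hBU.filter_mono inf_le_left))

theorem lusin_decomposition_general [T1Space X] {P F : Set X} (hP : Preperfect P)
    (hF : ¬ IsMeagre (Subtype.val ⁻¹' F : Set P)) :
    ∃ F₁ F₂ : Set X, F₁ ∪ F₂ = F ∧ Disjoint F₁ F₂ ∧
      ¬ ∃ B : Set X, BaireMeasurableSet (Subtype.val ⁻¹' B : Set P) ∧ F₁ ⊆ B ∧ B ∩ F₂ = ∅ := by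
  have := perfectSpace_coe_of_preperfect hP
  obtain ⟨A, hAF, hA⟩ := exists_subset_forall_baireMeasurableSet_inter_ne hF
    fun x _ => isMeagre_singleton_of_neBot x
  refine ⟨Subtype.val '' A, F \ Subtype.val '' A, union_sdiff_cancel (image_subset_iff.2 hAF),
    disjoint_sdiff_right, ?_⟩
  rintro ⟨B, hB, hAB, hBF⟩
  refine hA _ hB (Subset.antisymm ?_ (subset_inter hAF (image_subset_iff.1 hAB)))
  rintro x ⟨hxF, hxB⟩
  by_contra hxA
  have hx : x.1 ∈ B ∩ (F \ Subtype.val '' A) :=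
    ⟨hxB, hxF, by rwa [Subtype.val_injective.mem_set_image]⟩
  rwa [hBF] at hx

end Nonseparation

/-- **Lusin–Novikov (Baire part).** If `F ⊆ ℝ` is not always of 1st category
(there is a perfect set `P` such that `F ∩ P` is non-meager in the subspace
topology of `P`), then `F` splits into two disjoint pieces which cannot be
separated by a Borel set. -/
theorem lusin_decomposition (F : Set ℝ)
    (hF : ∃ P : Set ℝ, Perfect P ∧ ¬ IsMeagre (Subtype.val ⁻¹' F : Set P)) :
    ∃ F₁ F₂ : Set ℝ, F₁ ∪ F₂ = F ∧ Disjoint F₁ F₂ ∧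
      ¬ ∃ B : Set ℝ, MeasurableSet B ∧ F₁ ⊆ B ∧ B ∩ F₂ = ∅ := by
  obtain ⟨P, hP, hFP⟩ := hF
  obtain ⟨F₁, F₂, hunion, hdisj, hsep⟩ := lusin_decomposition_general hP.acc hFP
  exact ⟨F₁, F₂, hunion, hdisj, fun ⟨B, hB, hB₁, hB₂⟩ =>
    hsep ⟨B, (measurable_subtype_coe hB).baireMeasurableSet, hB₁, hB₂⟩⟩
end

section
/- Let I be a nondegenerate closed interval of ℝ and let E ⊆ I be a set which is non-meager in ℝ. Then there exist a nondegenerate closed interval J ⊆ I and two disjoint subsets E₁ and E₂ of E such that for every point x ∈ J and every open set V containing x, both E₁ ∩ V and E₂ ∩ V are non-meager in ℝ. -/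
/-!
Suppose that no `A ⊆ E` and `E \ A` are of second category at every point of a common nonempty open
set. Then every subset of `E` agrees with a relatively open subset of `E` up to a meagre set, so the
Kuratowski–Ulam theorem holds for *arbitrary* relations on `E`: if all vertical sections are meagre,
then so are almost all horizontal ones. Replacing `E` by a non-meagre subset of least cardinality
and well-ordering it in the least possible order type, all initial segments become meagre. By
Kuratowski–Ulam some final segment is then meagre too, and `E` is a union of two meagre sets. This
is the category analogue of Ulam's argument against real-valued measurable cardinals.
-/

open Set Filter Topology TopologicalSpace
open scoped Cardinal

section Residual

variable {X Y : Type*} [TopologicalSpace X] [TopologicalSpace Y]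

lemma isMeagre_iff_eventually_notMem {s : Set X} : IsMeagre s ↔ ∀ᵇ x, x ∉ s :=
  Iff.rfl

lemma not_isMeagre_iff_frequently_mem {s : Set X} : ¬ IsMeagre s ↔ ∃ᵇ x, x ∈ s :=
  Iff.rfl

lemma isMeagre_singleton [T1Space X] (x : X) [(𝓝[≠] x).NeBot] : IsMeagre {x} :=
  residual_of_dense_open isOpen_compl_singleton (dense_compl_singleton x)

lemma exists_seq_isNowhereDense_of_isMeagre {s : Set X} (hs : IsMeagre s) :
    ∃ F : ℕ → Set X, (∀ n, IsNowhereDense (F n)) ∧ s ⊆ ⋃ n, F n := by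
  obtain ⟨S, hS, hSc, hsS⟩ := isMeagre_iff_countable_union_isNowhereDense.1 hs
  obtain ⟨F, hF⟩ := (hSc.insert ∅).exists_eq_range (insert_nonempty ∅ S)
  refine ⟨F, fun n => ?_, ?_⟩
  · have hFn : F n ∈ insert ∅ S := hF ▸ mem_range_self n
    exact forall_mem_insert.2 ⟨isNowhereDense_empty, hS⟩ _ hFn
  · rw [← sUnion_range, ← hF]
    exact hsS.trans (sUnion_subset_sUnion (subset_insert ∅ S))

/-- The open dense case of the Kuratowski–Ulam theorem. -/
lemma eventually_residual_section_of_dense_open [SecondCountableTopology Y] {G : Set (X × Y)}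
    (hGo : IsOpen G) (hGd : Dense G) : ∀ᵇ x : X, ∀ᵇ y : Y, (x, y) ∈ G := by
  have hmeets : ∀ V ∈ countableBasis Y, ∀ᵇ x : X, ∃ y ∈ V, (x, y) ∈ G := by
    intro V hV
    have hVo : IsOpen V := isOpen_of_mem_countableBasis hV
    have hopen : IsOpen (Prod.fst '' (G ∩ univ ×ˢ V)) :=
      isOpenMap_fst _ (hGo.inter (isOpen_univ.prod hVo))
    have hdense : Dense (Prod.fst '' (G ∩ univ ×ˢ V)) := by
      refine dense_iff_inter_open.2 fun U hU hUne => ?_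
      obtain ⟨⟨x, y⟩, ⟨hx, hy⟩, hxy⟩ := hGd.inter_open_nonempty (U ×ˢ V) (hU.prod hVo)
        (hUne.prod (nonempty_of_mem_countableBasis hV))
      exact ⟨x, hx, (x, y), ⟨hxy, mem_univ x, hy⟩, rfl⟩
    filter_upwards [residual_of_dense_open hopen hdense]
    rintro _ ⟨⟨x, y⟩, ⟨hxy, -, hy⟩, rfl⟩
    exact ⟨y, hy, hxy⟩
  filter_upwards [(eventually_countable_ball (countable_countableBasis Y)).2 hmeets] with x hx
  refine residual_of_dense_open (hGo.preimage (Continuous.prodMk_right x)) ?_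
  exact (isBasis_countableBasis Y).dense_iff.2 fun V hV _ => hx V hV

end Residual

section SecondCategory

variable {X : Type*} [TopologicalSpace X] {E : Set X} {x : X}

/-- `E` is of second category at `x`: it is non-meagre in every open set containing `x`. -/
def IsSecondCategoryAt (E : Set X) (x : X) : Prop :=
  ∀ V : Set X, IsOpen V → x ∈ V → ¬ IsMeagre (E ∩ V)

lemma IsSecondCategoryAt.mem_closure (h : IsSecondCategoryAt E x) : x ∈ closure E :=
  mem_closure_iff.2 fun V hV hxV => inter_comm E V ▸ nonempty_of_not_isMeagre (h V hV hxV)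

lemma setOf_not_isSecondCategoryAt (E : Set X) :
    {x | ¬ IsSecondCategoryAt E x} = ⋃₀ {V | IsOpen V ∧ IsMeagre (E ∩ V)} := by
  ext x
  simp only [IsSecondCategoryAt, mem_ofPred_eq, mem_sUnion]
  grind

lemma isOpen_setOf_not_isSecondCategoryAt (E : Set X) :
    IsOpen {x | ¬ IsSecondCategoryAt E x} := by
  rw [setOf_not_isSecondCategoryAt]
  exact isOpen_sUnion fun _ hV => hV.1

/-- The Banach category theorem. -/
lemma eventually_residual_isSecondCategoryAt [SecondCountableTopology X] (E : Set X) :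
    ∀ᵇ x, x ∈ E → IsSecondCategoryAt E x := by
  obtain ⟨T, hTc, hT, hTU⟩ := isOpen_sUnion_countable {V | IsOpen V ∧ IsMeagre (E ∩ V)}
    fun _ hV => hV.1
  have hmeagre : IsMeagre (E ∩ {x | ¬ IsSecondCategoryAt E x}) := by
    rw [setOf_not_isSecondCategoryAt, ← hTU, sUnion_eq_biUnion, inter_iUnion₂]
    exact isMeagre_biUnion hTc fun V hV => (hT hV).2
  filter_upwards [isMeagre_iff_eventually_notMem.1 hmeagre] with x hx hxE
  exact not_not.1 fun h => hx ⟨hxE, h⟩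

end SecondCategory

section AlmostOpen

variable {X Y : Type*} [TopologicalSpace X] [TopologicalSpace Y]

/-- For all `y ∈ E` outside a meagre set, the section at `y` contains the dense set
`(closure (F y))ᶜ`. -/
lemma dense_union_iUnion_basis_prod [SecondCountableTopology X] {E : Set Y} {F : E → Set X}
    {O : countableBasis X → Set Y} (hF : ∀ y, IsNowhereDense (F y))
    (hO : ∀ᵇ y, ∀ (k : countableBasis X) (hy : y ∈ E), Disjoint (k : Set X) (F ⟨y, hy⟩) → y ∈ O k) :
    Dense (univ ×ˢ {y | ¬ IsSecondCategoryAt E y} ∪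
      ⋃ k : countableBasis X, (k : Set X) ×ˢ O k) := by
  rw [dense_iff_inter_open]
  rintro W hW ⟨⟨x, y⟩, hxy⟩
  by_cases hy : IsSecondCategoryAt E y
  swap
  · exact ⟨(x, y), hxy, Or.inl ⟨mem_univ x, hy⟩⟩
  obtain ⟨U, V, hU, hV, hxU, hyV, hUV⟩ := isOpen_prod_iff.1 hW x y hxy
  obtain ⟨z, ⟨hzE, hzV⟩, hz⟩ :=
    ((not_isMeagre_iff_frequently_mem.1 (hy V hV hyV)).and_eventually hO).exists
  have hne : (U ∩ (closure (F ⟨z, hzE⟩))ᶜ).Nonempty :=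
    (interior_eq_empty_iff_dense_compl.1 (hF ⟨z, hzE⟩)).inter_open_nonempty U hU ⟨x, hxU⟩
  obtain ⟨k, hk, ⟨u, hu⟩, hkU⟩ := (isBasis_countableBasis X).exists_nonempty_subset hne
    (hU.inter isClosed_closure.isOpen_compl)
  have hkF : Disjoint k (F ⟨z, hzE⟩) :=
    disjoint_left.2 fun t ht htF => (hkU ht).2 (subset_closure htF)
  have hzO : z ∈ O ⟨k, hk⟩ := hz ⟨k, hk⟩ hzE hkF
  exact ⟨(u, z), hUV ⟨(hkU hu).1, hzV⟩, Or.inr (mem_iUnion.2 ⟨⟨k, hk⟩, hu, hzO⟩)⟩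

/-- Every subset of `E` is relatively open in `E` up to a meagre set. Inside such an `E` every set
behaves as if it had the property of Baire. -/
def HasAlmostOpenSubsets (E : Set X) : Prop :=
  ∀ A ⊆ E, ∃ O, IsOpen O ∧ A =ᵇ (E ∩ O : Set X)

lemma hasAlmostOpenSubsets_of_interior_eq_empty [SecondCountableTopology X] {E : Set X}
    (hE : ∀ A ⊆ E, interior {x | IsSecondCategoryAt A x ∧ IsSecondCategoryAt (E \ A) x} = ∅) :
    HasAlmostOpenSubsets E := by
  intro A hAE
  have hopen : IsOpen {x | IsSecondCategoryAt A x ∧ IsSecondCategoryAt (E \ A) x}ᶜ := by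
    simpa only [compl_ofPred, not_and_or, ofPred_or] using
      (isOpen_setOf_not_isSecondCategoryAt A).union (isOpen_setOf_not_isSecondCategoryAt (E \ A))
  have hdense := interior_eq_empty_iff_dense_compl.1 (hE A hAE)
  refine ⟨_, isOpen_setOf_not_isSecondCategoryAt (E \ A), eventuallyEq_set.2 ?_⟩
  filter_upwards [residual_of_dense_open hopen hdense, eventually_residual_isSecondCategoryAt A,
    eventually_residual_isSecondCategoryAt (E \ A)] with x hx hxA hxEA
  exact ⟨fun h => ⟨hAE h, fun h' => hx ⟨hxA h, h'⟩⟩,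
    fun ⟨hxE, h⟩ => by_contra fun hA => h (hxEA ⟨hxE, hA⟩)⟩

namespace HasAlmostOpenSubsets

lemma mono {E E' : Set X} (hE : HasAlmostOpenSubsets E) (hE' : E' ⊆ E) :
    HasAlmostOpenSubsets E' := by
  intro A hA
  obtain ⟨O, hO, hAO⟩ := hE A (hA.trans hE')
  refine ⟨O, hO, eventuallyEq_set.2 ?_⟩
  filter_upwards [eventuallyEq_set.1 hAO] with x hx
  exact ⟨fun h => ⟨hA h, (hx.1 h).2⟩, fun h => hx.2 ⟨hE' h.1, h.2⟩⟩

variable [SecondCountableTopology X] [SecondCountableTopology Y] {E : Set Y} {F : E → Set X}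

lemma eventually_isMeagre_section_of_isNowhereDense (hE : HasAlmostOpenSubsets E)
    (hF : ∀ y, IsNowhereDense (F y)) :
    ∀ᵇ x : X, IsMeagre (((↑) : E → Y) '' {y | x ∈ F y}) := by
  let missing (k : countableBasis X) : Set Y := (↑) '' {y : E | Disjoint (k : Set X) (F y)}
  choose O hO hmissing using fun k => hE (missing k) (Subtype.coe_image_subset E _)
  have hmissing : ∀ᵇ y, ∀ k, y ∈ missing k ↔ y ∈ E ∩ O k :=
    eventually_countable_forall.2 fun k => eventuallyEq_set.1 (hmissing k)
  have hGo : IsOpen (univ ×ˢ {y | ¬ IsSecondCategoryAt E y} ∪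
      ⋃ k : countableBasis X, (k : Set X) ×ˢ O k) :=
    (isOpen_univ.prod (isOpen_setOf_not_isSecondCategoryAt E)).union
      (isOpen_iUnion fun k => (isOpen_of_mem_countableBasis k.2).prod (hO k))
  have hGd := dense_union_iUnion_basis_prod hF
    (hmissing.mono fun y hy k hyE hkF => ((hy k).1 ⟨⟨y, hyE⟩, hkF, rfl⟩).2)
  filter_upwards [eventually_residual_section_of_dense_open hGo hGd] with x hx
  rw [isMeagre_iff_eventually_notMem]
  filter_upwards [hx, hmissing, eventually_residual_isSecondCategoryAt E] with y hG hy hyE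
  rintro ⟨y, hxF, rfl⟩
  obtain ⟨-, hyG⟩ | hyG := hG
  · exact hyG (hyE y.2)
  · obtain ⟨k, hxk, hyO⟩ := mem_iUnion.1 hyG
    obtain ⟨y', hdisj, hy'⟩ := (hy k).2 ⟨y.2, hyO⟩
    exact disjoint_left.1 hdisj hxk (Subtype.ext hy' ▸ hxF)

lemma eventually_isMeagre_section (hE : HasAlmostOpenSubsets E) (hF : ∀ y, IsMeagre (F y)) :
    ∀ᵇ x : X, IsMeagre (((↑) : E → Y) '' {y | x ∈ F y}) := by
  choose N hN hFN using fun y => exists_seq_isNowhereDense_of_isMeagre (hF y)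
  have hsections : ∀ᵇ x : X, ∀ n, IsMeagre (((↑) : E → Y) '' {y | x ∈ N y n}) :=
    eventually_countable_forall.2 fun n =>
      hE.eventually_isMeagre_section_of_isNowhereDense fun y => hN y n
  filter_upwards [hsections] with x hx
  refine (isMeagre_iUnion hx).mono ?_
  rw [← image_iUnion]
  exact image_mono fun y hy => mem_iUnion.2 (mem_iUnion.1 (hFN y hy) : ∃ n, x ∈ N y n)

end HasAlmostOpenSubsets

end AlmostOpen

section LeastCardinality

lemma exists_subset_forall_mk_lt {α : Type*} {P : Set α → Prop} {E : Set α} (hE : P E) :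
    ∃ E' ⊆ E, P E' ∧ ∀ s ⊆ E', #s < #E' → ¬ P s := by
  obtain ⟨E', ⟨hE'E, hE'⟩, hmin⟩ := (InvImage.wf (fun s : Set α => #s) Cardinal.lt_wf).has_min
    {s | s ⊆ E ∧ P s} ⟨E, Subset.rfl, hE⟩
  exact ⟨E', hE'E, hE', fun s hs hlt hPs => hmin s ⟨hs.trans hE'E, hPs⟩ hlt⟩

variable {X : Type*} [TopologicalSpace X] {E : Set X}

lemma exists_linearOrder_isMeagre_image_Iic (hpt : ∀ x ∈ E, IsMeagre {x})
    (hsmall : ∀ s ⊆ E, #s < #E → IsMeagre s) :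
    ∃ _ : LinearOrder E, ∀ x : E, IsMeagre (((↑) : E → X) '' Iic x) := by
  obtain ⟨order, _, hord⟩ := Cardinal.exists_ord_eq_type_lt E
  refine ⟨order, fun x => ?_⟩
  have hIio : IsMeagre (((↑) : E → X) '' Iio x) :=
    hsmall _ (Subtype.coe_image_subset E _)
      (Cardinal.mk_image_le.trans_lt (Cardinal.mk_Iio_lt x hord))
  rw [← Iio_insert, image_insert_eq]
  exact (hpt x x.2).union hIio

theorem HasAlmostOpenSubsets.isMeagre [SecondCountableTopology X] (hE : HasAlmostOpenSubsets E)
    (hpt : ∀ x ∈ E, IsMeagre {x}) : IsMeagre E := by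
  by_contra hnm
  obtain ⟨E', hE'E, hE', hsmall⟩ :=
    exists_subset_forall_mk_lt (P := fun s => ¬ IsMeagre s) hnm
  obtain ⟨_, hIic⟩ := exists_linearOrder_isMeagre_image_Iic (fun x hx => hpt x (hE'E hx))
    fun s hs hlt => not_not.1 (hsmall s hs hlt)
  obtain ⟨x, hx, hfinal⟩ := ((not_isMeagre_iff_frequently_mem.1 hE').and_eventually
    ((hE.mono hE'E).eventually_isMeagre_section hIic)).exists
  refine hE' (((hIic ⟨x, hx⟩).union hfinal).mono fun y hy => ?_)
  rcases le_total (⟨y, hy⟩ : E') ⟨x, hx⟩ with hle | hle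
  · exact Or.inl ⟨⟨y, hy⟩, hle, rfl⟩
  · exact Or.inr ⟨⟨y, hy⟩, ⟨⟨x, hx⟩, hle, rfl⟩, rfl⟩

end LeastCardinality

lemma exists_lt_Icc_subset_of_isOpen {α : Type*} [LinearOrder α] [TopologicalSpace α]
    [OrderTopology α] [DenselyOrdered α] [Nontrivial α] {U : Set α} (hU : IsOpen U)
    (hne : U.Nonempty) : ∃ c d : α, c < d ∧ Icc c d ⊆ U := by
  obtain ⟨a, b, hab, hsub⟩ := hU.exists_Ioo_subset hne
  obtain ⟨c, hac, hcb⟩ := exists_between hab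
  obtain ⟨d, hcd, hdb⟩ := exists_between hcb
  exact ⟨c, d, hcd, (Icc_subset_Ioo hac hdb).trans hsub⟩

theorem sierpinski_lemma_general {X : Type*} [TopologicalSpace X] [SecondCountableTopology X]
    {E : Set X} (hpt : ∀ x ∈ E, IsMeagre {x}) (hE : ¬ IsMeagre E) :
    ∃ U : Set X, IsOpen U ∧ U.Nonempty ∧ U ⊆ closure E ∧
      ∃ E₁ E₂ : Set X, E₁ ⊆ E ∧ E₂ ⊆ E ∧ Disjoint E₁ E₂ ∧
        ∀ x ∈ U, IsSecondCategoryAt E₁ x ∧ IsSecondCategoryAt E₂ x := by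
  let D (A : Set X) : Set X := {x | IsSecondCategoryAt A x ∧ IsSecondCategoryAt (E \ A) x}
  obtain ⟨A, hAE, hA⟩ : ∃ A ⊆ E, (interior (D A)).Nonempty := by
    by_contra! hempty
    exact hE ((hasAlmostOpenSubsets_of_interior_eq_empty hempty).isMeagre hpt)
  have hDA : interior (D A) ⊆ D A := interior_subset
  exact ⟨interior (D A), isOpen_interior, hA,
    fun x hx => closure_mono hAE (hDA hx).1.mem_closure,
    A, E \ A, hAE, sdiff_subset, disjoint_sdiff_right, fun x hx => hDA hx⟩

/-- **Sierpiński's Lemme** (due to Lusin). If `E` is a non-meager subset of a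
nondegenerate closed interval `I = [a, b]`, then there are a nondegenerate closed
subinterval `J = [c, d] ⊆ I` and two disjoint subsets `E₁, E₂ ⊆ E`, each of which
is of 2nd category at every point of `J`. -/
theorem sierpinski_lemma (a b : ℝ) (hab : a < b) (E : Set ℝ)
    (hEI : E ⊆ Set.Icc a b) (hE : ¬ IsMeagre E) :
    ∃ c d : ℝ, c < d ∧ Set.Icc c d ⊆ Set.Icc a b ∧
      ∃ E₁ E₂ : Set ℝ, E₁ ⊆ E ∧ E₂ ⊆ E ∧ Disjoint E₁ E₂ ∧
        ∀ x ∈ Set.Icc c d, ∀ V : Set ℝ, IsOpen V → x ∈ V →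
          ¬ IsMeagre (E₁ ∩ V) ∧ ¬ IsMeagre (E₂ ∩ V) := by
  obtain ⟨U, hU, hUne, hUE, E₁, E₂, h₁, h₂, hdisj, hcat⟩ :=
    sierpinski_lemma_general (fun x _ => isMeagre_singleton x) hE
  obtain ⟨c, d, hcd, hcdU⟩ := exists_lt_Icc_subset_of_isOpen hU hUne
  exact ⟨c, d, hcd, (hcdU.trans hUE).trans (closure_minimal hEI isClosed_Icc), E₁, E₂, h₁, h₂,
    hdisj, fun x hx V hV hxV =>
      ⟨(hcat x (hcdU hx)).1 V hV hxV, (hcat x (hcdU hx)).2 V hV hxV⟩⟩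
end

section
/- Let Y be a second countable T1 topological space without isolated points and let E ⊆ Y be a non-meager set. Then E can be written as the union of two disjoint subsets E₁ and E₂ such that there is no set G ⊆ Y having the Baire property with E₁ ⊆ G and G ∩ E₂ = ∅. -/
/-- A set has the Baire property if its symmetric difference with some open set
is meager. -/
def HasBaireProperty {Y : Type*} [TopologicalSpace Y] (s : Set Y) : Prop :=
  ∃ U : Set Y, IsOpen U ∧ IsMeagre (symmDiff s U)

/-!
Suppose that every part of `E` is cut out of `E`, up to a meager set, by an open set. Then one half
of the Kuratowski–Ulam theorem holds on `E × E` for *arbitrary* relations: a family of open sets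
`O y` indexed by `y ∈ E` is determined by the countably many sets `{y ∈ E | B ⊆ O y}`, `B` a basic
open set, and replacing these by open sets exhibits almost all the `O y` as sections of one open
subset of the product. Now well-order `E` and cut it down to a nonmeager initial segment all of
whose proper initial segments are meager. For every `y`, almost every `x` satisfies `y < x`;
exchanging the quantifiers, for almost every `x` almost every `y` satisfies `y < x`. Thus for some
`x` almost every `y` satisfies both `x < y` and `y < x`.
-/

open Filter Set Topology TopologicalSpace

section OpenSections

variable {X Y : Type*} [TopologicalSpace X] [TopologicalSpace Y]
  {l : Filter Y} [CountableInterFilter l]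

theorem eventually_mem_of_isOpen_of_frequently_nonempty_inter [SecondCountableTopology Y]
    (hl : l ≤ residual Y) {T : Set Y} (hT : IsOpen T)
    (h : ∀ V ∈ countableBasis Y, (∃ᶠ y in l, y ∈ V) → (T ∩ V).Nonempty) :
    ∀ᶠ y in l, y ∈ T := by
  have avoids_null : ∀ᶠ y in l, ∀ V ∈ countableBasis Y, ¬(T ∩ V).Nonempty → y ∉ V := by
    refine (eventually_countable_ball (countable_countableBasis Y)).2 fun V hV ↦ ?_
    by_cases hTV : (T ∩ V).Nonempty
    · exact .of_forall fun _ hTV' ↦ absurd hTV hTV'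
    · exact (not_frequently.1 (mt (h V hV) hTV)).mono fun _ hy _ ↦ hy
  filter_upwards [avoids_null, hl (closure_residualEq hT.isLocallyClosed)] with y hy hyT
  refine hyT.mp <| (isBasis_countableBasis Y).mem_closure_iff.2 fun V hV hyV ↦ ?_
  by_contra hTV
  exact hy V hV (by rwa [inter_comm]) hyV

theorem eventually_eventually_mem_of_isOpen_of_dense [SecondCountableTopology Y]
    (hl : l ≤ residual Y) {W : Set (X × Y)} (hW : IsOpen W)
    (hd : ∀ᶠ y in l, Dense {x | (x, y) ∈ W}) :
    ∀ᶠ x in residual X, ∀ᶠ y in l, (x, y) ∈ W := by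
  have meets : ∀ᶠ x in residual X, ∀ V ∈ countableBasis Y, (∃ᶠ y in l, y ∈ V) →
      ({y | (x, y) ∈ W} ∩ V).Nonempty := by
    refine (eventually_countable_ball (countable_countableBasis Y)).2 fun V hV ↦
      eventually_imp_distrib_left.2 fun hVl ↦ ?_
    obtain ⟨y, hyV, hy⟩ := (hVl.and_eventually hd).exists
    have projection_eq :
        {x | ({y | (x, y) ∈ W} ∩ V).Nonempty} = Prod.fst '' (W ∩ Prod.snd ⁻¹' V) := by
      ext x
      simp [Set.Nonempty]
    refine residual_of_dense_open ?_ (hy.mono fun x hx ↦ ⟨y, hx, hyV⟩)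
    rw [projection_eq]
    exact isOpenMap_fst _ (hW.inter ((isOpen_of_mem_countableBasis hV).preimage continuous_snd))
  filter_upwards [meets] with x hx
  exact eventually_mem_of_isOpen_of_frequently_nonempty_inter hl
    (hW.preimage (Continuous.prodMk_right x)) hx

theorem exists_isOpen_prod_eventually_section_eq [SecondCountableTopology X]
    (hl : ∀ A : Set Y, ∃ U : Set Y, IsOpen U ∧ A =ᶠ[l] U)
    {O : Y → Set X} (hO : ∀ᶠ y in l, IsOpen (O y)) :
    ∃ W : Set (X × Y), IsOpen W ∧ ∀ᶠ y in l, {x | (x, y) ∈ W} = O y := by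
  choose U hU hAU using fun B : Set X ↦ hl {y | B ⊆ O y}
  refine ⟨⋃ B ∈ countableBasis X, B ×ˢ U B, isOpen_biUnion fun B hB ↦
    (isOpen_of_mem_countableBasis hB).prod (hU B), ?_⟩
  have subset_iff : ∀ᶠ y in l, ∀ B ∈ countableBasis X, (B ⊆ O y ↔ y ∈ U B) :=
    (eventually_countable_ball (countable_countableBasis X)).2 fun B _ ↦ (hAU B).mem_iff
  filter_upwards [subset_iff, hO] with y hy hOy
  ext x
  simp only [mem_ofPred_eq, mem_iUnion, mem_prod, exists_prop]
  constructor
  · rintro ⟨B, hB, hxB, hyB⟩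
    exact (hy B hB).2 hyB hxB
  · intro hx
    obtain ⟨B, hB, hxB, hBO⟩ := (isBasis_countableBasis X).exists_subset_of_mem_open hx hOy
    exact ⟨B, hB, hxB, (hy B hB).1 hBO⟩

theorem exists_seq_isOpen_dense_of_mem_residual {s : Set X} (hs : s ∈ residual X) :
    ∃ O : ℕ → Set X, (∀ n, IsOpen (O n)) ∧ (∀ n, Dense (O n)) ∧ ⋂ n, O n ⊆ s := by
  obtain ⟨S, hSo, hSd, hSc, hSs⟩ := mem_residual_iff.1 hs
  obtain rfl | hne := S.eq_empty_or_nonempty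
  · exact ⟨fun _ ↦ univ, fun _ ↦ isOpen_univ, fun _ ↦ dense_univ, by simpa using hSs⟩
  · obtain ⟨O, rfl⟩ := hSc.exists_eq_range hne
    exact ⟨O, forall_mem_range.1 hSo, forall_mem_range.1 hSd, by rwa [← sInter_range]⟩

theorem eventually_residual_swap [SecondCountableTopology X] [SecondCountableTopology Y]
    (hl : l ≤ residual Y) (hlo : ∀ A : Set Y, ∃ U : Set Y, IsOpen U ∧ A =ᶠ[l] U)
    {P : X → Y → Prop} (h : ∀ᶠ y in l, ∀ᶠ x in residual X, P x y) :
    ∀ᶠ x in residual X, ∀ᶠ y in l, P x y := by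
  choose! O hOo hOd hOP using fun y (hy : ∀ᶠ x in residual X, P x y) ↦
    exists_seq_isOpen_dense_of_mem_residual hy
  choose W hWo hWO using fun n ↦
    exists_isOpen_prod_eventually_section_eq hlo (h.mono fun y hy ↦ hOo y hy n)
  have mem_all : ∀ᶠ x in residual X, ∀ n, ∀ᶠ y in l, (x, y) ∈ W n := by
    refine eventually_countable_forall.2 fun n ↦
      eventually_eventually_mem_of_isOpen_of_dense hl (hWo n) ?_
    filter_upwards [h, hWO n] with y hy hWy
    exact hWy ▸ hOd y hy n
  filter_upwards [mem_all] with x hx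
  filter_upwards [h, eventually_countable_forall.2 hx, eventually_countable_forall.2 hWO]
    with y hy hxy hWy
  exact hOP y hy (mem_iInter.2 fun n ↦ hWy n ▸ hxy n)

theorem eventually_residual_inf_principal_swap [SecondCountableTopology X]
    [SecondCountableTopology Y] (hl : l ≤ residual Y)
    (hlo : ∀ A : Set Y, ∃ U : Set Y, IsOpen U ∧ A =ᶠ[l] U) {S : Set X} {P : X → Y → Prop}
    (h : ∀ᶠ y in l, ∀ᶠ x in residual X ⊓ 𝓟 S, P x y) :
    ∀ᶠ x in residual X ⊓ 𝓟 S, ∀ᶠ y in l, P x y := by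
  simp only [eventually_inf_principal] at h ⊢
  simpa only [eventually_imp_distrib_left] using eventually_residual_swap hl hlo h

end OpenSections

theorem exists_neBot_inf_principal_forall_eventually_lt {α : Type*} [LinearOrder α]
    [WellFoundedLT α] {l : Filter α} [l.NeBot] (hl : ∀ a, ∀ᶠ x in l, x ≠ a) :
    ∃ s : Set α, (l ⊓ 𝓟 s).NeBot ∧ ∀ a ∈ s, ∀ᶠ x in l ⊓ 𝓟 s, a < x := by
  by_cases h : ∃ a, ∃ᶠ x in l, x ≤ a
  · obtain ⟨a, ha, hmin⟩ := wellFounded_lt.has_min {a | ∃ᶠ x in l, x ≤ a} h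
    refine ⟨Iio a, frequently_mem_iff_neBot.1 ?_, fun b hb ↦ ?_⟩
    · exact (ha.and_eventually (hl a)).mono fun x hx ↦ hx.1.lt_of_ne hx.2
    · refine .filter_mono inf_le_left ?_
      simpa using fun hb' ↦ hmin b hb' hb
  · refine ⟨univ, by simpa, fun a _ ↦ ?_⟩
    simpa using not_exists.1 h a

section BaireProperty

variable {Y : Type*} [TopologicalSpace Y] {E : Set Y}

theorem not_isMeagre_iff_residual_inf_principal_neBot :
    ¬IsMeagre E ↔ (residual Y ⊓ 𝓟 E).NeBot :=
  frequently_mem_iff_neBot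

theorem exists_forall_isOpen_not_eventuallyEq_of_eventually_lt [SecondCountableTopology Y]
    [Preorder Y] (hE : ¬IsMeagre E)
    (hlt : ∀ᶠ y in residual Y ⊓ 𝓟 E, ∀ᶠ x in residual Y ⊓ 𝓟 E, y < x) :
    ∃ A : Set Y, ∀ U : Set Y, IsOpen U → ¬A =ᶠ[residual Y ⊓ 𝓟 E] U := by
  by_contra! hopen
  have := not_isMeagre_iff_residual_inf_principal_neBot.1 hE
  have hgt : ∀ᶠ x in residual Y ⊓ 𝓟 E, ∀ᶠ y in residual Y ⊓ 𝓟 E, y < x :=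
    eventually_residual_inf_principal_swap inf_le_left hopen hlt
  obtain ⟨x, hx_lt, hlt_x⟩ := (hlt.and hgt).exists
  obtain ⟨y, hxy, hyx⟩ := (hx_lt.and hlt_x).exists
  exact hxy.asymm hyx

theorem exists_forall_isOpen_not_eventuallyEq [SecondCountableTopology Y]
    (hs : ∀ y ∈ E, IsMeagre {y}) (hE : ¬IsMeagre E) :
    ∃ A : Set Y, ∀ U : Set Y, IsOpen U → ¬A =ᶠ[residual Y ⊓ 𝓟 E] U := by
  have := not_isMeagre_iff_residual_inf_principal_neBot.1 hE
  obtain ⟨_, _⟩ := exists_wellFoundedLT Y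
  have ne_eventually (y : Y) : ∀ᶠ x in residual Y ⊓ 𝓟 E, x ≠ y := by
    by_cases hy : y ∈ E
    · exact .filter_mono inf_le_left (hs y hy)
    · filter_upwards [mem_inf_of_right (mem_principal_self E)] with x hx
      exact ne_of_mem_of_not_mem hx hy
  obtain ⟨s, hne, hlt⟩ := exists_neBot_inf_principal_forall_eventually_lt ne_eventually
  have lt_eventually : ∀ᶠ y in residual Y ⊓ 𝓟 E ⊓ 𝓟 s, ∀ᶠ x in residual Y ⊓ 𝓟 E ⊓ 𝓟 s, y < x :=
    mem_of_superset (mem_inf_of_right (mem_principal_self s)) hlt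
  rw [inf_assoc, inf_principal] at hne lt_eventually
  obtain ⟨A, hA⟩ := exists_forall_isOpen_not_eventuallyEq_of_eventually_lt
    (not_isMeagre_iff_residual_inf_principal_neBot.2 hne) lt_eventually
  have residual_le : residual Y ⊓ 𝓟 (E ∩ s) ≤ residual Y ⊓ 𝓟 E :=
    inf_le_inf_left _ (principal_mono.2 inter_subset_left)
  exact ⟨A, fun U hU hAU ↦ hA U hU (hAU.filter_mono residual_le)⟩

theorem HasBaireProperty.residualEq_isOpen {G : Set Y} (hG : HasBaireProperty G) :
    ∃ U : Set Y, IsOpen U ∧ G =ᵇ U := by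
  obtain ⟨U, hU, hGU⟩ := hG
  refine ⟨U, hU, eventuallyEq_set.2 ?_⟩
  filter_upwards [hGU] with y hy
  simpa [mem_symmDiff, iff_iff_implies_and_implies] using hy

theorem nonmeager_not_baire_separated_general [SecondCountableTopology Y]
    (hs : ∀ y ∈ E, IsMeagre {y}) (hE : ¬IsMeagre E) :
    ∃ E₁ E₂ : Set Y, E₁ ∪ E₂ = E ∧ Disjoint E₁ E₂ ∧
      ¬∃ G : Set Y, HasBaireProperty G ∧ E₁ ⊆ G ∧ G ∩ E₂ = ∅ := by
  obtain ⟨A, hA⟩ := exists_forall_isOpen_not_eventuallyEq hs hE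
  refine ⟨E ∩ A, E \ A, inter_union_sdiff E A, disjoint_sdiff_inter.symm, ?_⟩
  rintro ⟨G, hG, hAG, hGA⟩
  obtain ⟨U, hU, hGU⟩ := hG.residualEq_isOpen
  have A_eq_G : A =ᶠ[𝓟 E] G := by
    refine eventuallyEq_set.2 (eventually_principal.2 fun y hy ↦ ⟨fun hyA ↦ hAG ⟨hy, hyA⟩, ?_⟩)
    exact fun hyG ↦ by_contra fun hyA ↦ hGA.subset ⟨hyG, hy, hyA⟩
  exact hA U hU ((A_eq_G.filter_mono inf_le_right).trans (hGU.filter_mono inf_le_left))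

end BaireProperty

/-- **Corollary.** In a second countable T1 space without isolated points, every
non-meager set splits into two disjoint pieces which cannot be separated by a
set having the Baire property. -/
theorem nonmeager_not_baire_separated {Y : Type*} [TopologicalSpace Y]
    [SecondCountableTopology Y] [T1Space Y]
    (hni : ∀ y : Y, ¬ IsOpen ({y} : Set Y)) (E : Set Y) (hE : ¬ IsMeagre E) :
    ∃ E₁ E₂ : Set Y, E₁ ∪ E₂ = E ∧ Disjoint E₁ E₂ ∧
      ¬ ∃ G : Set Y, HasBaireProperty G ∧ E₁ ⊆ G ∧ G ∩ E₂ = ∅ :=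
  nonmeager_not_baire_separated_general (fun y _ ↦ residual_of_dense_open isOpen_compl_singleton
    (dense_compl_singleton_iff_not_open.2 (hni y))) hE
end

section
/- Let Y be a second countable T1 topological space equipped with a finite, outer regular Borel measure μ which vanishes on singletons, and let E ⊆ Y. If the outer measure μ*(E) > 0, then E can be written as the union of two disjoint subsets E₁ and E₂ such that there is no null-measurable set C (measurable with respect to the completion of μ) with E₁ ⊆ C and C ∩ E₂ = ∅. -/
open MeasureTheory

open Set TopologicalSpace

/-! A second countable space carries no nonzero finite atomless measure that is defined on *all*
subsets and whose null sets have null Gδ hulls. Indeed, well-order the space and let `s` be an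
initial segment all of whose proper initial segments are null. Enclose each of these in a null Gδ
set. Since every subset of the first factor is measurable and the second factor has a countable
basis, the resulting relation is measurable in the product, so by Fubini's theorem almost every
final segment of `s` is null as well. As `s` is the union of an initial segment, a point and a
final segment, it is null; by well-founded induction, so is the whole space.

If the two parts of every partition of `E` could be separated, every subset of `E` would be the
trace of a null-measurable set, so the outer measure of `μ` would be a measure on all subsets
of `E`, and hence zero. -/

section NullGδHulls

variable {X Y : Type*} [TopologicalSpace X] [TopologicalSpace Y]

/-- Every `μ`-null set is contained in a `μ`-null Gδ set. This is a weakening of outer regularity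
that depends only on the null ideal of `μ`, so it survives replacing `μ` by an equivalent finite
measure. -/
def HasNullGδHulls {_ : MeasurableSpace X} (μ : Measure X) : Prop :=
  ∀ ⦃s : Set X⦄, μ s = 0 → ∃ t, s ⊆ t ∧ IsGδ t ∧ μ t = 0

theorem hasNullGδHulls_of_outerRegular {_ : MeasurableSpace X} (μ : Measure X)
    [μ.OuterRegular] : HasNullGδHulls μ := by
  intro s hs
  have exists_isOpen_lt (n : ℕ) : ∃ U, s ⊆ U ∧ IsOpen U ∧ μ U < (n : ENNReal)⁻¹ :=
    s.exists_isOpen_lt_of_lt _ (by simp [hs])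
  choose U hsU hUo hUlt using exists_isOpen_lt
  refine ⟨⋂ n, U n, subset_iInter hsU, .iInter_of_isOpen hUo, ?_⟩
  by_contra hpos
  obtain ⟨n, hn⟩ := ENNReal.exists_inv_nat_lt hpos
  exact (hn.trans_le (measure_mono (iInter_subset U n))).not_gt (hUlt n)

theorem HasNullGδHulls.of_absolutelyContinuous {_ : MeasurableSpace X} {μ ν : Measure X}
    (hμ : HasNullGδHulls μ) (hμν : μ ≪ ν) (hνμ : ν ≪ μ) : HasNullGδHulls ν := by
  intro s hs
  obtain ⟨t, hst, ht, hμt⟩ := hμ (hμν hs)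
  exact ⟨t, hst, ht, hνμ hμt⟩

theorem HasNullGδHulls.of_apply_eq_image {_ : MeasurableSpace X} {_ : MeasurableSpace Y}
    {μ : Measure Y} (hμ : HasNullGδHulls μ) {ν : Measure X} {f : X → Y} (hf : Continuous f)
    (hν : ∀ s, ν s = μ (f '' s)) : HasNullGδHulls ν := by
  intro s hs
  obtain ⟨t, hst, ht, hμt⟩ := hμ (hν s ▸ hs)
  refine ⟨f ⁻¹' t, image_subset_iff.1 hst, ht.preimage hf, ?_⟩
  rw [hν]
  exact measure_mono_null (image_preimage_subset f t) hμt

end NullGδHulls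

section DiscreteFubini

variable {α β : Type*} [MeasurableSpace α] [DiscreteMeasurableSpace α]
  [TopologicalSpace β] [SecondCountableTopology β] [MeasurableSpace β] [OpensMeasurableSpace β]

theorem measurableSet_setOf_mem_of_forall_isOpen {U : α → Set β} (hU : ∀ a, IsOpen (U a)) :
    MeasurableSet {p : α × β | p.2 ∈ U p.1} := by
  have eq_iUnion_prod : {p : α × β | p.2 ∈ U p.1} =
      ⋃ B ∈ countableBasis β, {a | B ⊆ U a} ×ˢ B := by
    ext ⟨a, b⟩
    simp only [mem_ofPred_eq, mem_iUnion₂, mem_prod, exists_prop]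
    constructor
    · intro hb
      obtain ⟨B, hB, hbB, hBU⟩ := (isBasis_countableBasis β).exists_subset_of_mem_open hb (hU a)
      exact ⟨B, hB, hBU, hbB⟩
    · rintro ⟨B, -, hBU, hbB⟩
      exact hBU hbB
  rw [eq_iUnion_prod]
  exact .biUnion (countable_countableBasis β) fun B hB ↦
    MeasurableSet.of_discrete.prod (isOpen_of_mem_countableBasis hB).measurableSet

theorem measurableSet_setOf_mem_of_forall_isGδ {G : α → Set β} (hG : ∀ a, IsGδ (G a)) :
    MeasurableSet {p : α × β | p.2 ∈ G p.1} := by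
  choose U hUo hGU using fun a ↦ (hG a).eq_iInter_nat
  simp only [hGU, mem_iInter, ofPred_forall]
  exact .iInter fun n ↦ measurableSet_setOf_mem_of_forall_isOpen fun a ↦ hUo a n

theorem ae_ae_swap_of_hasNullGδHulls {μ : Measure α} [SFinite μ] {ν : Measure β} [SFinite ν]
    (hν : HasNullGδHulls ν) {p : α → β → Prop} (hp : ∀ᵐ a ∂μ, ∀ᵐ b ∂ν, p a b) :
    ∀ᵐ b ∂ν, ∀ᵐ a ∂μ, p a b := by
  have exists_hull (a : α) :
      ∃ G, {b | ¬ p a b} ⊆ G ∧ IsGδ G ∧ ((∀ᵐ b ∂ν, p a b) → ν G = 0) := by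
    by_cases ha : ∀ᵐ b ∂ν, p a b
    · obtain ⟨G, hsub, hG, hGnull⟩ := hν (ae_iff.1 ha)
      exact ⟨G, hsub, hG, fun _ ↦ hGnull⟩
    · exact ⟨univ, subset_univ _, .univ, fun h ↦ absurd h ha⟩
  choose G hsub hG hGnull using exists_hull
  have hGae : ∀ᵐ a ∂μ, ∀ᵐ b ∂ν, b ∉ G a :=
    hp.mono fun a ha ↦ measure_eq_zero_iff_ae_notMem.1 (hGnull a ha)
  rw [Measure.ae_ae_comm (measurableSet_setOf_mem_of_forall_isGδ hG).compl] at hGae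
  exact hGae.mono fun b hb ↦ hb.mono fun a ha ↦ not_not.1 fun hab ↦ ha (hsub a hab)

end DiscreteFubini

section DiscreteMeasure

variable {X : Type*} [TopologicalSpace X] [SecondCountableTopology X]
  [MeasurableSpace X] [DiscreteMeasurableSpace X] {μ : Measure X} [SFinite μ] [NullSingletonClass μ]

theorem measure_eq_zero_of_null_initial_segments [LinearOrder X] (hμ : HasNullGδHulls μ)
    {s : Set X} (hs : ∀ y ∈ s, μ (s ∩ Iio y) = 0) : μ s = 0 := by
  by_contra hpos
  have : OpensMeasurableSpace X := ⟨fun _ _ ↦ .of_discrete⟩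
  have initial_null : ∀ᵐ y ∂μ.restrict s, ∀ᵐ x ∂μ, x ∈ s → ¬ x < y :=
    (ae_restrict_iff' .of_discrete).2 <| .of_forall fun y hy ↦ by
      simpa only [mem_inter_iff, mem_Iio, not_and] using
        measure_eq_zero_iff_ae_notMem.1 (hs y hy)
  obtain ⟨x, hx, final_null⟩ : ∃ x ∈ s, ∀ᵐ y ∂μ.restrict s, x ∈ s → ¬ x < y :=
    Measure.exists_mem_of_measure_ne_zero_of_ae hpos
      (ae_restrict_of_ae (ae_ae_swap_of_hasNullGδHulls hμ initial_null))
  have s_subset : s ⊆ (s ∩ Iio x) ∪ {x} ∪ (s ∩ Ioi x) := by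
    intro y hy
    rcases lt_trichotomy y x with h | h | h <;> simp [hy, h]
  have inter_Ioi_null : μ (s ∩ Ioi x) = 0 := by
    rw [ae_restrict_iff' .of_discrete] at final_null
    exact measure_eq_zero_iff_ae_notMem.2 (final_null.mono fun y hy hmem ↦ hy hmem.1 hx hmem.2)
  exact hpos <| measure_mono_null s_subset <|
    measure_union_null (measure_union_null (hs x hx) (measure_singleton x)) inter_Ioi_null

theorem eq_zero_of_hasNullGδHulls_of_discrete (hμ : HasNullGδHulls μ) : μ = 0 := by
  obtain ⟨_, _⟩ := exists_wellFoundedLT X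
  have Iio_null (y : X) : μ (Iio y) = 0 := by
    induction y using WellFoundedLT.induction with
    | ind y ih =>
      exact measure_eq_zero_of_null_initial_segments hμ fun z hz ↦
        measure_mono_null inter_subset_right (ih z hz)
  rw [← Measure.measure_univ_eq_zero]
  exact measure_eq_zero_of_null_initial_segments hμ fun y _ ↦
    measure_mono_null inter_subset_right (Iio_null y)

end DiscreteMeasure

section Traces

variable {Y : Type*} {_ : MeasurableSpace Y} {μ : Measure Y} {E : Set Y}

theorem exists_measure_top_apply_eq_image_val
    (hE : ∀ A ⊆ E, ∃ C, NullMeasurableSet C μ ∧ E ∩ C = A) :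
    ∃ ν : @Measure E ⊤, ∀ s : Set E, ν s = μ ((↑) '' s) := by
  let m : OuterMeasure E := OuterMeasure.comap (↑) μ.toOuterMeasure
  have caratheodory_eq_top : ⊤ ≤ m.caratheodory := by
    intro s _ t
    obtain ⟨C, hC, hCs⟩ := hE ((↑) '' s) (Subtype.coe_image_subset E s)
    have preimage_C : (↑) ⁻¹' C = s := by
      rw [← Subtype.preimage_coe_self_inter, hCs, preimage_image_eq _ Subtype.val_injective]
    simp only [m, OuterMeasure.comap_apply, Measure.coe_toOuterMeasure, ← preimage_C,
      image_inter_preimage, image_sdiff_preimage]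
    exact (measure_inter_add_sdiff₀ _ hC).symm
  exact ⟨@OuterMeasure.toMeasure _ ⊤ m caratheodory_eq_top, fun s ↦
    @toMeasure_apply _ ⊤ m caratheodory_eq_top s trivial⟩

theorem measure_eq_zero_of_forall_subset_eq_inter_nullMeasurableSet [TopologicalSpace Y]
    [SecondCountableTopology Y] [IsFiniteMeasure μ] [NullSingletonClass μ] (hμ : HasNullGδHulls μ)
    (hE : ∀ A ⊆ E, ∃ C, NullMeasurableSet C μ ∧ E ∩ C = A) : μ E = 0 := by
  obtain ⟨ν, hν⟩ := exists_measure_top_apply_eq_image_val hE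
  let : MeasurableSpace E := ⊤
  have : IsFiniteMeasure ν := ⟨by rw [hν]; exact measure_lt_top μ _⟩
  have : NullSingletonClass ν := ⟨fun x ↦ by rw [hν, image_singleton, measure_singleton]⟩
  have ν_eq_zero : ν = 0 :=
    eq_zero_of_hasNullGδHulls_of_discrete (hμ.of_apply_eq_image continuous_subtype_val hν)
  simpa [ν_eq_zero] using (hν univ).symm

end Traces

theorem positive_outer_measure_not_measurably_separated_general {Y : Type*}
    [TopologicalSpace Y] [SecondCountableTopology Y] [MeasurableSpace Y]
    (μ : Measure Y) [SFinite μ] [NullSingletonClass μ] (hμ : HasNullGδHulls μ)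
    (E : Set Y) (hE : 0 < μ E) :
    ∃ E₁ E₂ : Set Y, E₁ ∪ E₂ = E ∧ Disjoint E₁ E₂ ∧
      ¬ ∃ C : Set Y, NullMeasurableSet C μ ∧ E₁ ⊆ C ∧ C ∩ E₂ = ∅ := by
  by_contra! separable
  have hμfin : μ ≪ μ.toFinite := absolutelyContinuous_toFinite μ
  have hfinμ : μ.toFinite ≪ μ := toFinite_absolutelyContinuous μ
  have : NullSingletonClass μ.toFinite := ⟨fun y ↦ hfinμ (measure_singleton y)⟩
  refine hE.ne' (hμfin ?_)
  refine measure_eq_zero_of_forall_subset_eq_inter_nullMeasurableSet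
    (hμ.of_absolutelyContinuous hμfin hfinμ) fun A hA ↦ ?_
  obtain ⟨C, hC, hAC, hCA⟩ := separable A (E \ A) (union_sdiff_cancel hA) disjoint_sdiff_right
  refine ⟨C, hC.mono_ac hfinμ, Subset.antisymm (fun y hy ↦ ?_) (subset_inter hA hAC)⟩
  by_contra hyA
  exact notMem_empty y (hCA ▸ ⟨hy.2, hy.1, hyA⟩)

/-- **Corollary 5.8.** In a second countable T1 space with a finite outer regular
Borel measure vanishing on singletons, every set of positive outer measure splits
into two disjoint pieces which cannot be separated by a μ-measurable set. -/
theorem positive_outer_measure_not_measurably_separated {Y : Type*}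
    [TopologicalSpace Y] [SecondCountableTopology Y] [T1Space Y]
    [MeasurableSpace Y] [BorelSpace Y]
    (μ : Measure Y) [IsFiniteMeasure μ] [μ.OuterRegular]
    (hpt : ∀ y : Y, μ {y} = 0) (E : Set Y) (hE : 0 < μ E) :
    ∃ E₁ E₂ : Set Y, E₁ ∪ E₂ = E ∧ Disjoint E₁ E₂ ∧
      ¬ ∃ C : Set Y, NullMeasurableSet C μ ∧ E₁ ⊆ C ∧ C ∩ E₂ = ∅ :=
  have : NullSingletonClass μ := ⟨hpt⟩
  positive_outer_measure_not_measurably_separated_general μ (hasNullGδHulls_of_outerRegular μ) E hE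
end

section
/- Let Y be a second countable T1 topological space and let 𝔑 denote the family of all finite, outer regular Borel measures on Y that vanish on singletons. If E ⊆ Y is not universally 𝔑-null (there exists μ ∈ 𝔑 with μ*(E) > 0), then E can be written as the union of two disjoint subsets E₁ and E₂ such that there is no set C that is null-measurable with respect to every μ ∈ 𝔑 and satisfies E₁ ⊆ C and C ∩ E₂ = ∅. -/
open MeasureTheory

/-!
If every splitting of `E` could be separated by null-measurable sets, the outer measure of `μ`
would be countably additive on *all* subsets of `E`. Suppose `μ E ≠ 0`, let `F ⊆ E` have minimal
cardinality among the non-null subsets, and well-order `F` along its initial ordinal, so that all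
initial segments are null. By outer regularity the segment `{i | i ≤ j}` lies in a null Gδ set
`G j`, and second countability makes `{(i, j) | i ∈ G j}` a countable combination of rectangles,
hence measurable for the product of the full power sets. As `i ≤ j` implies `i ∈ G j`, Fubini's
theorem gives Sierpiński's contradiction: almost all `(i, j)` satisfy neither `i ≤ j` nor `j ≤ i`.
-/

open Set

section Fubini

theorem measure_eq_zero_of_total_of_ae_not {I : Type*} [MeasurableSpace I] {m : Measure I}
    [SFinite m] {r : I → I → Prop} (hr : MeasurableSet {p : I × I | r p.1 p.2})
    (htotal : ∀ i j, r i j ∨ r j i) (hnull : ∀ j, ∀ᵐ i ∂m, ¬ r i j) : m = 0 := by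
  by_contra hm
  have : NeZero m := ⟨hm⟩
  have hswap : ∀ᵐ i ∂m, ∀ᵐ j ∂m, ¬ r i j :=
    (Measure.ae_ae_comm hr.compl).2 (.of_forall hnull)
  obtain ⟨i, hi⟩ := hswap.exists
  obtain ⟨j, hij, hji⟩ := (hi.and (hnull i)).exists
  exact (htotal i j).elim hij hji

variable {Y I J : Type*} [TopologicalSpace Y] [SecondCountableTopology Y]
  [MeasurableSpace I] [MeasurableSpace J] [DiscreteMeasurableSpace J]

theorem measurableSet_setOf_mem_of_isOpen {x : I → Y}
    (hx : ∀ V, IsOpen V → MeasurableSet (x ⁻¹' V)) {U : J → Set Y} (hU : ∀ j, IsOpen (U j)) :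
    MeasurableSet {p : I × J | x p.1 ∈ U p.2} := by
  let B := TopologicalSpace.countableBasis Y
  have hB : TopologicalSpace.IsTopologicalBasis B := TopologicalSpace.isBasis_countableBasis Y
  have hrect : {p : I × J | x p.1 ∈ U p.2} = ⋃ V ∈ B, (x ⁻¹' V) ×ˢ {j | V ⊆ U j} := by
    ext ⟨i, j⟩
    simp only [mem_iUnion, mem_prod, mem_preimage, mem_ofPred_eq, exists_prop]
    refine ⟨fun hij => hB.exists_subset_of_mem_open hij (hU j), ?_⟩
    rintro ⟨V, -, hiV, hVU⟩
    exact hVU hiV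
  rw [hrect]
  exact .biUnion (TopologicalSpace.countable_countableBasis Y) fun V hV =>
    (hx V (hB.isOpen hV)).prod .of_discrete

theorem measurableSet_setOf_mem_of_isGδ {x : I → Y}
    (hx : ∀ V, IsOpen V → MeasurableSet (x ⁻¹' V)) {G : J → Set Y} (hG : ∀ j, IsGδ (G j)) :
    MeasurableSet {p : I × J | x p.1 ∈ G p.2} := by
  choose U hU hGU using fun j => isGδ_iff_eq_iInter_nat.1 (hG j)
  simp only [hGU, mem_iInter, ofPred_forall]
  exact .iInter fun n => measurableSet_setOf_mem_of_isOpen hx fun j => hU j n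

end Fubini

theorem exists_isGδ_superset_measure_eq_zero {Y : Type*} [TopologicalSpace Y] [MeasurableSpace Y]
    {μ : Measure Y} [μ.OuterRegular] {A : Set Y} (hA : μ A = 0) :
    ∃ G, A ⊆ G ∧ IsGδ G ∧ μ G = 0 := by
  have hopen (n : ℕ) : ∃ U, A ⊆ U ∧ IsOpen U ∧ μ U < (n : ENNReal)⁻¹ :=
    A.exists_isOpen_lt_of_lt _ (by simp [hA])
  choose U hAU hU hμU using hopen
  refine ⟨⋂ n, U n, subset_iInter hAU, .iInter_of_isOpen hU, ?_⟩
  by_contra hne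
  obtain ⟨n, hn⟩ := ENNReal.exists_inv_nat_lt hne
  exact (hn.trans_le (measure_mono (iInter_subset U n))).not_gt (hμU n)

/-- The trace on `E` of the completed σ-algebra of `μ` consists of all subsets of `E`;
equivalently, the two parts of every splitting of `E` are separated by a null-measurable set. -/
def HasDiscreteTrace {Y : Type*} [MeasurableSpace Y] (μ : Measure Y) (E : Set Y) : Prop :=
  ∀ S ⊆ E, ∃ C, NullMeasurableSet C μ ∧ E ∩ C = S

namespace HasDiscreteTrace

variable {Y I : Type*} [MeasurableSpace Y] {μ : Measure Y}

theorem mono {E F : Set Y} (hE : HasDiscreteTrace μ E) (hFE : F ⊆ E) : HasDiscreteTrace μ F := by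
  intro S hS
  obtain ⟨C, hC, rfl⟩ := hE S (hS.trans hFE)
  exact ⟨C, hC, by tauto_set⟩

theorem isCaratheodory_comap {x : I → Y} (h : HasDiscreteTrace μ (range x))
    (hx : Function.Injective x) (s : Set I) :
    (OuterMeasure.comap x μ.toOuterMeasure).IsCaratheodory s := by
  intro t
  obtain ⟨C, hC, hCs⟩ := h (x '' s) (image_subset_range x s)
  have hs : x ⁻¹' C = s := by
    rw [← hx.preimage_image s, ← hCs, preimage_range_inter]
  simp only [OuterMeasure.comap_apply, Measure.coe_toOuterMeasure]
  rw [← measure_inter_add_sdiff₀ (x '' t) hC, ← hs, image_inter_preimage, image_sdiff_preimage]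

theorem exists_measure_eq_image [MeasurableSpace I] [DiscreteMeasurableSpace I] {x : I → Y}
    (h : HasDiscreteTrace μ (range x)) (hx : Function.Injective x) :
    ∃ m : Measure I, ∀ s, m s = μ (x '' s) :=
  ⟨(OuterMeasure.comap x μ.toOuterMeasure).toMeasure fun s _ => h.isCaratheodory_comap hx s,
    fun _ => toMeasure_apply _ _ .of_discrete⟩

end HasDiscreteTrace

theorem sigmaFinite_of_forall_eq_image {Y I : Type*} [MeasurableSpace Y] [MeasurableSpace I]
    {μ : Measure Y} [SigmaFinite μ] {m : Measure I} {x : I → Y}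
    (hm : ∀ s, m s = μ (x '' s)) : SigmaFinite m :=
  ⟨⟨{ set n := x ⁻¹' spanningSets μ n
      set_mem _ := mem_univ _
      finite n := by
        rw [hm]
        exact (measure_mono (image_preimage_subset _ _)).trans_lt (measure_spanningSets_lt_top μ n)
      spanning := by rw [← preimage_iUnion, iUnion_spanningSets, preimage_univ] }⟩⟩

theorem exists_subset_linearOrder_forall_not_image_Iio {Y : Type*} {P : Set Y → Prop} {E : Set Y}
    (hE : P E) :
    ∃ F ⊆ E, P F ∧ ∃ _ : LinearOrder F, ∀ i : F, ¬ P (Subtype.val '' Iio i) := by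
  obtain ⟨F, ⟨hFE, hF⟩, hmin⟩ := exists_minimalFor_of_wellFoundedLT
    (fun F : Set Y => F ⊆ E ∧ P F) (fun F => Cardinal.mk F) ⟨E, subset_rfl, hE⟩
  obtain ⟨hlinear, _, hord⟩ := Cardinal.exists_ord_eq_type_lt F
  refine ⟨F, hFE, hF, hlinear, fun i hi => ?_⟩
  have hlt : Cardinal.mk (Subtype.val '' Iio i) < Cardinal.mk F :=
    Cardinal.mk_image_le.trans_lt (Cardinal.mk_Iio_lt i hord)
  exact hlt.not_ge (hmin ⟨(Subtype.coe_image_subset F _).trans hFE, hi⟩ hlt.le)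

section OuterRegular

variable {Y : Type*} [TopologicalSpace Y] [SecondCountableTopology Y] [MeasurableSpace Y]
  {μ : Measure Y} [SigmaFinite μ] [μ.OuterRegular]

theorem HasDiscreteTrace.measure_range_eq_zero {I : Type*} [LinearOrder I] {x : I → Y}
    (h : HasDiscreteTrace μ (range x)) (hx : Function.Injective x)
    (hnull : ∀ i, μ (x '' Iic i) = 0) : μ (range x) = 0 := by
  let _ : MeasurableSpace I := ⊤
  obtain ⟨m, hm⟩ := h.exists_measure_eq_image hx
  have := sigmaFinite_of_forall_eq_image hm
  choose G hxG hG hμG using fun i => exists_isGδ_superset_measure_eq_zero (hnull i)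
  have hm_zero : m = 0 := by
    refine measure_eq_zero_of_total_of_ae_not (r := fun i j => x i ∈ G j)
      (measurableSet_setOf_mem_of_isGδ (fun _ _ => .of_discrete) hG) (fun i j => ?_) fun j => ?_
    · exact (le_total i j).imp (fun hij => hxG j (mem_image_of_mem x hij))
        (fun hji => hxG i (mem_image_of_mem x hji))
    · have hpreimage : m (x ⁻¹' G j) = 0 := by
        rw [hm]
        exact measure_mono_null (image_preimage_subset x (G j)) (hμG j)
      exact measure_eq_zero_iff_ae_notMem.1 hpreimage
  rw [← image_univ, ← hm, hm_zero, Measure.coe_zero, Pi.zero_apply]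

theorem HasDiscreteTrace.measure_eq_zero [NullSingletonClass μ] {E : Set Y}
    (hE : HasDiscreteTrace μ E) : μ E = 0 := by
  by_contra hpos
  obtain ⟨F, hFE, hF, _, hIio⟩ :=
    exists_subset_linearOrder_forall_not_image_Iio (P := fun F => μ F ≠ 0) hpos
  have hIic (i : F) : μ (Subtype.val '' Iic i) = 0 := by
    rw [← Iio_insert, image_insert_eq, insert_eq]
    exact measure_union_null (measure_singleton _) (not_not.1 (hIio i))
  have hrange : HasDiscreteTrace μ (range (Subtype.val : F → Y)) :=
    hE.mono (Subtype.range_coe.trans_subset hFE)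
  have hrange_zero := hrange.measure_range_eq_zero Subtype.val_injective hIic
  rw [Subtype.range_coe] at hrange_zero
  exact hF hrange_zero

theorem not_universally_null_not_separated_general [NullSingletonClass μ] {E : Set Y}
    (hE : μ E ≠ 0) :
    ∃ E₁ E₂ : Set Y, E₁ ∪ E₂ = E ∧ Disjoint E₁ E₂ ∧
      ¬ ∃ C : Set Y, NullMeasurableSet C μ ∧ E₁ ⊆ C ∧ C ∩ E₂ = ∅ := by
  have hdiscrete : ¬ HasDiscreteTrace μ E := fun h => hE h.measure_eq_zero
  simp only [HasDiscreteTrace, not_forall] at hdiscrete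
  obtain ⟨S, hSE, hS⟩ := hdiscrete
  refine ⟨S, E \ S, union_sdiff_cancel hSE, disjoint_sdiff_right, ?_⟩
  rintro ⟨C, hC, hSC, hdisj⟩
  exact hS ⟨C, hC, by tauto_set⟩

end OuterRegular

/-- **Corollary 5.10.** Let `𝔑` be the family of all finite outer regular Borel
measures vanishing on singletons. Every set that is not universally `𝔑`-null
splits into two disjoint pieces which cannot be separated by a universally
`𝔑`-measurable set. -/
theorem not_universally_null_not_separated {Y : Type*} [TopologicalSpace Y]
    [SecondCountableTopology Y] [T1Space Y] [MeasurableSpace Y] [BorelSpace Y]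
    (E : Set Y)
    (hE : ∃ μ : Measure Y, IsFiniteMeasure μ ∧ μ.OuterRegular ∧
      (∀ y : Y, μ {y} = 0) ∧ 0 < μ E) :
    ∃ E₁ E₂ : Set Y, E₁ ∪ E₂ = E ∧ Disjoint E₁ E₂ ∧
      ¬ ∃ C : Set Y,
        (∀ μ : Measure Y, IsFiniteMeasure μ → μ.OuterRegular →
          (∀ y : Y, μ {y} = 0) → NullMeasurableSet C μ) ∧
        E₁ ⊆ C ∧ C ∩ E₂ = ∅ := by
  obtain ⟨μ, _, _, hsingleton, hpos⟩ := hE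
  have : NullSingletonClass μ := ⟨hsingleton⟩
  obtain ⟨E₁, E₂, hunion, hdisj, hsep⟩ := not_universally_null_not_separated_general hpos.ne'
  exact ⟨E₁, E₂, hunion, hdisj, fun ⟨C, hC, h⟩ =>
    hsep ⟨C, hC μ inferInstance inferInstance hsingleton, h⟩⟩
end

section
/- Let Y be a second countable topological space equipped with a finite, outer regular Borel measure μ, and let {A_γ : γ ∈ Γ} be a point-finite family of subsets of Y (each point of the union belongs to at most finitely many A_γ) with μ*(A_γ) = 0 for every γ. If the outer measure of the union E = ⋃_{γ∈Γ} A_γ satisfies μ*(E) > 0, then there exists Θ ⊆ Γ such that ⋃_{γ∈Θ} A_γ is not null-measurable (not measurable with respect to the completion of μ). -/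
open MeasureTheory

/-!
Suppose that all subunions of `A` are null-measurable. The key fact is that `⋃ γ, A γ ×ˢ B γ` is
null in the product whenever every `B γ` is null. Cover each `B γ` by a set of small measure that
is a union of members of one fixed countable family `𝓤`, namely a basis of the topology pulled back
from `ℕ → Bool`, for which finite measures are outer regular. Grouping the resulting rectangles by
members of `𝓤` rather than by `γ` exhibits the enlarged set as a countable union of null-measurable
rectangles, and point-finiteness makes its sections small. Fubini's theorem then applies.

Well-order `Γ` and let `E` be the first of the sets `⋃ β < γ, A β`, or else the full union, that is
not null. Taking for `B β` the union of the sets up to `β`, the key fact shows that `E ×ˢ E` is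
covered by a null set and its reflection in the diagonal, so `E` is null after all.
-/

theorem comap_mapNatBool (Y : Type*) [m : MeasurableSpace Y]
    [MeasurableSpace.CountablyGenerated Y] :
    MeasurableSpace.pi.comap (MeasurableSpace.mapNatBool Y) = m := by
  refine le_antisymm (MeasurableSpace.measurable_mapNatBool Y).comap_le ?_
  conv_lhs => rw [← MeasurableSpace.generateFrom_natGeneratingSequence Y]
  refine MeasurableSpace.generateFrom_le ?_
  rintro _ ⟨n, rfl⟩
  refine ⟨(fun x ↦ x n) ⁻¹' {true}, measurable_pi_apply n (measurableSet_singleton true), ?_⟩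
  ext y
  simp [MeasurableSpace.mapNatBool]

theorem exists_secondCountable_pseudoMetrizable_borelSpace (Y : Type*) [MeasurableSpace Y]
    [MeasurableSpace.CountablyGenerated Y] :
    ∃ _ : TopologicalSpace Y, SecondCountableTopology Y ∧
      TopologicalSpace.PseudoMetrizableSpace Y ∧ BorelSpace Y := by
  let f := MeasurableSpace.mapNatBool Y
  let _ : TopologicalSpace Y := .induced f inferInstance
  refine ⟨inferInstance, TopologicalSpace.secondCountableTopology_induced Y _ f,
    (Topology.IsInducing.induced f).pseudoMetrizableSpace, ⟨?_⟩⟩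
  rw [borel_comap, ← BorelSpace.measurable_eq (α := ℕ → Bool), comap_mapNatBool]

theorem exists_countable_sUnion_superset_measure_lt {Y : Type*} [MeasurableSpace Y]
    [MeasurableSpace.CountablyGenerated Y] (ν : Measure Y) [IsFiniteMeasure ν] :
    ∃ 𝓤 : Set (Set Y), 𝓤.Countable ∧ (∀ u ∈ 𝓤, MeasurableSet u) ∧
      ∀ s r, ν s < r → ∃ 𝓥 ⊆ 𝓤, s ⊆ ⋃₀ 𝓥 ∧ ν (⋃₀ 𝓥) < r := by
  obtain ⟨_, _, _, _⟩ := exists_secondCountable_pseudoMetrizable_borelSpace Y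
  have basis := TopologicalSpace.isBasis_countableBasis Y
  refine ⟨_, TopologicalSpace.countable_countableBasis Y,
    fun u hu ↦ (basis.isOpen hu).measurableSet, fun s r hs ↦ ?_⟩
  obtain ⟨G, hsG, hG, hGr⟩ := s.exists_isOpen_lt_of_lt r hs
  obtain ⟨𝓥, h𝓥, rfl⟩ := basis.open_eq_sUnion hG
  exact ⟨𝓥, h𝓥, hsG, hGr⟩

section Rectangles

variable {X Y Γ : Type*} [MeasurableSpace Y] {ν : Measure Y} {A : Γ → Set X}

theorem measure_section_iUnion_prod_le {B : Γ → Set Y} {ε : ENNReal} {x : X}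
    (hx : {γ | x ∈ A γ}.Finite) (hB : ∀ γ, ν (B γ) ≤ ε) :
    ν (Prod.mk x ⁻¹' ⋃ γ, A γ ×ˢ B γ) ≤ hx.toFinset.card * ε :=
  calc
    ν (Prod.mk x ⁻¹' ⋃ γ, A γ ×ˢ B γ) = ν (⋃ γ ∈ hx.toFinset, B γ) := by
      congr 1
      ext y
      simp
    _ ≤ ∑ γ ∈ hx.toFinset, ν (B γ) := measure_biUnion_finset_le _ _
    _ ≤ hx.toFinset.card * ε := by
      simpa using Finset.sum_le_card_nsmul hx.toFinset _ ε fun γ _ ↦ hB γ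

variable [MeasurableSpace X] {μ : Measure X}

theorem measure_prod_eq_zero_of_ae_section_eq_zero {s : Set (X × Y)}
    (hs : NullMeasurableSet s (μ.prod ν)) (hsec : ∀ᵐ x ∂μ, ν (Prod.mk x ⁻¹' s) = 0) :
    μ.prod ν s = 0 := by
  obtain ⟨t, hts, ht, hae⟩ := hs.exists_measurable_subset_ae_eq
  rw [← measure_congr hae]
  exact Measure.measure_prod_null_of_ae_null ht
    (hsec.mono fun _ hx ↦ measure_mono_null (Set.preimage_mono hts) hx)

theorem nullMeasurableSet_iUnion_prod_sUnion
    (hmeas : ∀ Θ : Set Γ, NullMeasurableSet (⋃ γ ∈ Θ, A γ) μ)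
    {𝓤 : Set (Set Y)} (h𝓤 : 𝓤.Countable) (h𝓤_meas : ∀ u ∈ 𝓤, NullMeasurableSet u ν)
    {𝓥 : Γ → Set (Set Y)} (h𝓥 : ∀ γ, 𝓥 γ ⊆ 𝓤) :
    NullMeasurableSet (⋃ γ, A γ ×ˢ ⋃₀ 𝓥 γ) (μ.prod ν) := by
  have regroup : ⋃ γ, A γ ×ˢ ⋃₀ 𝓥 γ = ⋃ u ∈ 𝓤, (⋃ γ ∈ {γ | u ∈ 𝓥 γ}, A γ) ×ˢ u := by
    ext ⟨x, y⟩
    simp only [Set.mem_iUnion, Set.mem_prod, Set.mem_sUnion, Set.mem_ofPred_eq]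
    grind
  rw [regroup]
  exact .biUnion h𝓤 fun u hu ↦ (hmeas _).prod (h𝓤_meas u hu)

theorem measure_prod_iUnion_prod_eq_zero [MeasurableSpace.CountablyGenerated Y] [SFinite ν]
    (hpf : ∀ x, {γ | x ∈ A γ}.Finite)
    (hmeas : ∀ Θ : Set Γ, NullMeasurableSet (⋃ γ ∈ Θ, A γ) μ)
    {B : Γ → Set Y} (hB : ∀ γ, ν (B γ) = 0) :
    μ.prod ν (⋃ γ, A γ ×ˢ B γ) = 0 := by
  wlog hν : IsFiniteMeasure ν generalizing ν
  · exact Measure.AbsolutelyContinuous.rfl.prod (absolutelyContinuous_toFinite ν)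
      (this (fun γ ↦ toFinite_absolutelyContinuous ν (hB γ)) inferInstance)
  obtain ⟨𝓤, h𝓤, h𝓤_meas, approx⟩ := exists_countable_sUnion_superset_measure_lt ν
  have cover (k : ℕ) (γ : Γ) : ∃ 𝓥 ⊆ 𝓤, B γ ⊆ ⋃₀ 𝓥 ∧ ν (⋃₀ 𝓥) < (k : ENNReal)⁻¹ :=
    approx _ _ (by simp [hB γ])
  choose 𝓥 h𝓥 hB𝓥 h𝓥_lt using cover
  let K : Set (X × Y) := ⋂ k, ⋃ γ, A γ ×ˢ ⋃₀ 𝓥 k γ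
  have subset_K : ⋃ γ, A γ ×ˢ B γ ⊆ K :=
    Set.subset_iInter fun k ↦ Set.iUnion_mono fun γ ↦ Set.prod_mono_right (hB𝓥 k γ)
  have hK : NullMeasurableSet K (μ.prod ν) := .iInter fun k ↦
    nullMeasurableSet_iUnion_prod_sUnion hmeas h𝓤
      (fun u hu ↦ (h𝓤_meas u hu).nullMeasurableSet) (h𝓥 k)
  refine measure_mono_null subset_K
    (measure_prod_eq_zero_of_ae_section_eq_zero hK (.of_forall fun x ↦ ?_))
  have section_le (k : ℕ) :
      ν (Prod.mk x ⁻¹' K) ≤ (hpf x).toFinset.card * (k : ENNReal)⁻¹ :=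
    (measure_mono (Set.preimage_mono (Set.iInter_subset _ k))).trans
      (measure_section_iUnion_prod_le (hpf x) fun γ ↦ (h𝓥_lt k γ).le)
  have bound_tendsto : Filter.Tendsto
      (fun k : ℕ ↦ ((hpf x).toFinset.card : ENNReal) * (k : ENNReal)⁻¹) Filter.atTop (nhds 0) := by
    simpa using ENNReal.Tendsto.const_mul ENNReal.tendsto_inv_nat_nhds_zero
      (Or.inr (ENNReal.natCast_ne_top _))
  exact nonpos_iff_eq_zero.1 (ge_of_tendsto' bound_tendsto section_le)

end Rectangles

section NullFamilies

variable {Y Γ : Type*} [MeasurableSpace Y] [MeasurableSpace.CountablyGenerated Y]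
  {μ : Measure Y} [SFinite μ] {A : Γ → Set Y}

theorem measure_iUnion_eq_zero_of_measure_biUnion_Iio_eq_zero [LinearOrder Γ]
    (hpf : ∀ x, {γ | x ∈ A γ}.Finite)
    (hmeas : ∀ Θ : Set Γ, NullMeasurableSet (⋃ γ ∈ Θ, A γ) μ)
    (hnull : ∀ γ, μ (A γ) = 0) (hIio : ∀ γ, μ (⋃ β ∈ Set.Iio γ, A β) = 0) :
    μ (⋃ γ, A γ) = 0 := by
  let D : Set (Y × Y) := ⋃ γ, A γ ×ˢ ⋃ β ∈ Set.Iic γ, A β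
  have hIic (γ : Γ) : μ (⋃ β ∈ Set.Iic γ, A β) = 0 := by
    rw [← Set.Iio_insert, Set.biUnion_insert]
    exact measure_union_null (hnull γ) (hIio γ)
  have hD : μ.prod μ D = 0 := measure_prod_iUnion_prod_eq_zero hpf hmeas hIic
  have hD_swap : μ.prod μ (Prod.swap ⁻¹' D) = 0 :=
    Measure.measurePreserving_swap.quasiMeasurePreserving.preimage_null hD
  have square_subset : (⋃ γ, A γ) ×ˢ (⋃ γ, A γ) ⊆ D ∪ Prod.swap ⁻¹' D := by
    rintro ⟨x, y⟩ ⟨hx, hy⟩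
    obtain ⟨γ, hγ⟩ := Set.mem_iUnion.1 hx
    obtain ⟨β, hβ⟩ := Set.mem_iUnion.1 hy
    rcases le_total β γ with h | h
    · exact .inl (Set.mem_iUnion.2 ⟨γ, hγ, Set.mem_biUnion h hβ⟩)
    · exact .inr (Set.mem_iUnion.2 ⟨β, hβ, Set.mem_biUnion h hγ⟩)
  rw [← mul_self_eq_zero, ← Measure.prod_prod]
  exact measure_mono_null square_subset (measure_union_null hD hD_swap)

theorem measure_biUnion_Iio_eq_zero [LinearOrder Γ] [WellFoundedLT Γ]
    (hpf : ∀ x, {γ | x ∈ A γ}.Finite)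
    (hmeas : ∀ Θ : Set Γ, NullMeasurableSet (⋃ γ ∈ Θ, A γ) μ)
    (hnull : ∀ γ, μ (A γ) = 0) (γ : Γ) : μ (⋃ β ∈ Set.Iio γ, A β) = 0 := by
  induction γ using WellFoundedLT.induction with
  | ind γ ih =>
    rw [Set.biUnion_eq_iUnion]
    refine measure_iUnion_eq_zero_of_measure_biUnion_Iio_eq_zero
      (fun x ↦ (hpf x).preimage Subtype.val_injective.injOn) (fun Θ ↦ ?_)
      (fun β ↦ hnull β) (fun β ↦ ?_)
    · simpa only [Set.biUnion_image] using hmeas (Subtype.val '' Θ)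
    · refine measure_mono_null ?_ (ih β β.2)
      exact Set.iUnion₂_subset fun δ hδ ↦ Set.subset_biUnion_of_mem (u := A) hδ

theorem measure_iUnion_eq_zero_of_pointFinite (hpf : ∀ x, {γ | x ∈ A γ}.Finite)
    (hmeas : ∀ Θ : Set Γ, NullMeasurableSet (⋃ γ ∈ Θ, A γ) μ) (hnull : ∀ γ, μ (A γ) = 0) :
    μ (⋃ γ, A γ) = 0 := by
  obtain ⟨_, _⟩ := exists_wellFoundedLT Γ
  exact measure_iUnion_eq_zero_of_measure_biUnion_Iio_eq_zero hpf hmeas hnull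
    (measure_biUnion_Iio_eq_zero hpf hmeas hnull)

end NullFamilies

theorem pointFinite_null_family_nonmeasurable_subunion_general {Y : Type*}
    [MeasurableSpace Y] [MeasurableSpace.CountablyGenerated Y] (μ : Measure Y) [SFinite μ]
    {Γ : Type*} (A : Γ → Set Y) (hpf : ∀ x, {γ | x ∈ A γ}.Finite)
    (hnull : ∀ γ, μ (A γ) = 0) (hE : 0 < μ (⋃ γ, A γ)) :
    ∃ Θ : Set Γ, ¬ NullMeasurableSet (⋃ γ ∈ Θ, A γ) μ := by
  by_contra! hmeas
  exact hE.ne' (measure_iUnion_eq_zero_of_pointFinite hpf hmeas hnull)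

/-- **Prikry's Proposition (measure part).** A point-finite family of outer-null
sets whose union has positive outer measure admits a non-measurable subunion. -/
theorem pointFinite_null_family_nonmeasurable_subunion {Y : Type*}
    [TopologicalSpace Y] [SecondCountableTopology Y] [MeasurableSpace Y]
    [BorelSpace Y] (μ : Measure Y) [IsFiniteMeasure μ] [μ.OuterRegular]
    {Γ : Type*} (A : Γ → Set Y)
    (hpf : ∀ x : Y, {γ : Γ | x ∈ A γ}.Finite)
    (hnull : ∀ γ, μ (A γ) = 0) (hE : 0 < μ (⋃ γ, A γ)) :
    ∃ Θ : Set Γ, ¬ NullMeasurableSet (⋃ γ ∈ Θ, A γ) μ :=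
  pointFinite_null_family_nonmeasurable_subunion_general μ A hpf hnull hE
end

section
/- Let Y be a second countable topological space and let {A_γ : γ ∈ Γ} be a point-finite family of meager subsets of Y (each point of the union belongs to at most finitely many A_γ). If the union E = ⋃_{γ∈Γ} A_γ is non-meager, then there exists Θ ⊆ Γ such that ⋃_{γ∈Θ} A_γ does not have the Baire property. -/
/-!
Suppose all subunions have the Baire property and well-order `Γ`. By induction all initial unions
`M γ = ⋃ β ≤ γ, A β` are meager. In the "rectangle set" `R = ⋃ γ, M γ ×ˢ A γ` every section at
`y` is a finite union of meager sets. On the other hand, the section at a point `x ∈ A β` contains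
`A γ` for all `γ ≥ β`, so that `⋃ γ, A γ` is covered by this section and the meager set `M β`.
By a Kuratowski–Ulam argument the section of `R` at a residual set of points `x` is meager; hence
so is `⋃ γ, A γ`.

For that argument, cover each `M γ` by countably many closed meager sets and fix one such
`C γ` for every `γ`. Although `S = ⋃ γ, C γ ×ˢ A γ` need not be closed, its section at every `y` is,
being a finite union. So this section is determined by the basic open sets `U` disjoint from it,
and `U` is disjoint from it exactly when `y` lies outside the subunion of those `A γ` for which
`C γ` meets `U`. Replacing these countably many subunions by closed sets modulo meager sets
turns `S` into a closed set with the same sections at a residual set of points `y`.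
-/

open Set Filter Topology TopologicalSpace

theorem HasBaireProperty.baireMeasurableSet {Y : Type*} [TopologicalSpace Y] {s : Set Y}
    (hs : HasBaireProperty s) : BaireMeasurableSet s := by
  obtain ⟨U, hU, hsU⟩ := hs
  refine BaireMeasurableSet.iff_residualEq_isOpen.2 ⟨U, hU, eventuallyEq_set.2 ?_⟩
  filter_upwards [hsU] with y hy
  rw [mem_compl_iff, mem_symmDiff] at hy
  tauto

section Category

variable {X Y : Type*} [TopologicalSpace X] [TopologicalSpace Y]

theorem isMeagre_of_isMeagre_interior {s : Set X} (hs : IsClosed s)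
    (h : IsMeagre (interior s)) : IsMeagre s := by
  have h_frontier : IsMeagre (frontier s) :=
    (isClosed_frontier.isNowhereDense_iff.2 (interior_frontier hs)).isMeagre
  rw [← hs.closure_eq, closure_eq_interior_union_frontier]
  exact h.union h_frontier

theorem exists_isClosed_isMeagre_cover {s : Set X} (hs : IsMeagre s) :
    ∃ C : ℕ → Set X, (∀ n, IsClosed (C n)) ∧ (∀ n, IsMeagre (C n)) ∧ s ⊆ ⋃ n, C n := by
  obtain ⟨S, hSo, hSd, hSc, hSs⟩ := mem_residual_iff.1 hs
  have h_residual : ⋂₀ S ∈ residual X := mem_residual_iff.2 ⟨S, hSo, hSd, hSc, Subset.rfl⟩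
  obtain ⟨U, hUo, hU⟩ := IsGδ.eq_iInter_nat ⟨S, hSo, hSc, rfl⟩
  rw [hU] at h_residual hSs
  refine ⟨fun n => (U n)ᶜ, fun n => (hUo n).isClosed_compl, fun n => ?_, ?_⟩
  · rw [IsMeagre, compl_compl]
    exact mem_of_superset h_residual (iInter_subset U n)
  · rwa [← compl_iInter, subset_compl_comm]

/-- The Kuratowski–Ulam theorem for closed sets. -/
theorem eventually_isMeagre_section_of_isClosed [SecondCountableTopology Y] {F : Set (X × Y)}
    (hF : IsClosed F) (h : ∀ᵇ y, IsMeagre {x | (x, y) ∈ F}) :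
    ∀ᵇ x, IsMeagre {y | (x, y) ∈ F} := by
  have h_escape : ∀ᵇ x, ∀ U ∈ countableBasis Y,
      (∃ y ∈ U, IsMeagre {x | (x, y) ∈ F}) → ∃ y ∈ U, (x, y) ∉ F := by
    refine (eventually_countable_ball (countable_countableBasis Y)).2 fun U _ => ?_
    by_cases hU : ∃ y ∈ U, IsMeagre {x | (x, y) ∈ F}
    · obtain ⟨y, hyU, hy⟩ := hU
      filter_upwards [hy] with x hx _
      exact ⟨y, hyU, hx⟩
    · exact Eventually.of_forall fun _ h' => absurd h' hU
  filter_upwards [h_escape] with x hx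
  refine isMeagre_of_isMeagre_interior (hF.preimage (Continuous.prodMk_right x)) ?_
  filter_upwards [h] with y hy hy_int
  obtain ⟨U, hU, hyU, hUF⟩ :=
    (isBasis_countableBasis Y).exists_subset_of_mem_open hy_int isOpen_interior
  obtain ⟨z, hzU, hz⟩ := hx U hU ⟨y, hyU, hy⟩
  have hzF : z ∈ {y | (x, y) ∈ F} := interior_subset (hUF hzU)
  exact hz hzF

theorem exists_isClosed_eventually_mem_iff [SecondCountableTopology X] {S : Set (X × Y)}
    (h_closed : ∀ y, IsClosed {x | (x, y) ∈ S})
    (h_proj : ∀ U : Set X, IsOpen U → BaireMeasurableSet {y | ∃ x ∈ U, (x, y) ∈ S}) :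
    ∃ F : Set (X × Y), IsClosed F ∧ ∀ᵇ y, ∀ x, (x, y) ∈ F ↔ (x, y) ∈ S := by
  have h_open : ∀ U : countableBasis X, ∃ V : Set Y, IsOpen V ∧
      {y | ∃ x ∈ U.1, (x, y) ∈ S}ᶜ =ᵇ V := fun U =>
    (h_proj U (isOpen_of_mem_countableBasis U.2)).compl.residualEq_isOpen
  choose V hVo hV using h_open
  refine ⟨(⋃ U : countableBasis X, U.1 ×ˢ V U)ᶜ, (isOpen_iUnion fun U =>
    (isOpen_of_mem_countableBasis U.2).prod (hVo U)).isClosed_compl, ?_⟩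
  filter_upwards [eventually_countable_forall.2 fun U => eventuallyEq_set.1 (hV U)] with y hy x
  rw [← not_iff_not, mem_compl_iff, not_not]
  simp only [mem_iUnion, mem_prod, ← hy]
  constructor
  · rintro ⟨U, hxU, hU⟩ hxS
    exact hU ⟨x, hxU, hxS⟩
  · intro hxS
    obtain ⟨U, hU, hxU, hUS⟩ := (isBasis_countableBasis X).exists_subset_of_mem_open
      (show x ∈ {x | (x, y) ∈ S}ᶜ from hxS) (h_closed y).isOpen_compl
    exact ⟨⟨U, hU⟩, hxU, fun ⟨z, hzU, hzS⟩ => hUS hzU hzS⟩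

end Category

section PointFinite

variable {X Y Γ : Type*} [TopologicalSpace X] [TopologicalSpace Y] {A : Γ → Set Y}

theorem eventually_isMeagre_biUnion_of_isClosed [SecondCountableTopology X]
    [SecondCountableTopology Y] {C : Γ → Set X} (hC : ∀ γ, IsClosed (C γ))
    (hCm : ∀ γ, IsMeagre (C γ)) (hA : ∀ y, {γ | y ∈ A γ}.Finite)
    (hBP : ∀ Θ : Set Γ, BaireMeasurableSet (⋃ γ ∈ Θ, A γ)) :
    ∀ᵇ x, IsMeagre (⋃ γ ∈ {γ | x ∈ C γ}, A γ) := by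
  have section_eq (y : Y) :
      {x | (x, y) ∈ ⋃ γ, C γ ×ˢ A γ} = ⋃ γ ∈ {γ | y ∈ A γ}, C γ := by
    ext x
    simp [and_comm]
  have proj_eq (U : Set X) : {y | ∃ x ∈ U, (x, y) ∈ ⋃ γ, C γ ×ˢ A γ} =
      ⋃ γ ∈ {γ | (U ∩ C γ).Nonempty}, A γ := by
    ext y
    simp only [mem_iUnion, mem_prod, mem_ofPred_eq, Set.Nonempty, mem_inter_iff]
    tauto
  obtain ⟨F, hF, hFS⟩ := exists_isClosed_eventually_mem_iff (S := ⋃ γ, C γ ×ˢ A γ)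
    (fun y => section_eq y ▸ (hA y).isClosed_biUnion fun γ _ => hC γ)
    (fun U _ => proj_eq U ▸ hBP _)
  have hFm : ∀ᵇ y, IsMeagre {x | (x, y) ∈ F} := by
    filter_upwards [hFS] with y hy
    simp only [hy, section_eq]
    exact isMeagre_biUnion (hA y).countable fun γ _ => hCm γ
  filter_upwards [eventually_isMeagre_section_of_isClosed hF hFm] with x hx
  filter_upwards [hFS, hx] with y hyS hyF hy
  obtain ⟨γ, hxγ, hyγ⟩ := mem_iUnion₂.1 hy
  exact hyF ((hyS x).2 (mem_iUnion.2 ⟨γ, hxγ, hyγ⟩))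

theorem eventually_isMeagre_biUnion [SecondCountableTopology X] [SecondCountableTopology Y]
    {M : Γ → Set X} (hM : ∀ γ, IsMeagre (M γ)) (hA : ∀ y, {γ | y ∈ A γ}.Finite)
    (hBP : ∀ Θ : Set Γ, BaireMeasurableSet (⋃ γ ∈ Θ, A γ)) :
    ∀ᵇ x, IsMeagre (⋃ γ ∈ {γ | x ∈ M γ}, A γ) := by
  choose C hC hCm hMC using fun γ => exists_isClosed_isMeagre_cover (hM γ)
  have h_closed (n : ℕ) : ∀ᵇ x, IsMeagre (⋃ γ ∈ {γ | x ∈ C γ n}, A γ) :=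
    eventually_isMeagre_biUnion_of_isClosed (hC · n) (hCm · n) hA hBP
  filter_upwards [eventually_countable_forall.2 h_closed] with x hx
  refine (isMeagre_iUnion hx).mono (iUnion₂_subset fun γ hxγ => ?_)
  obtain ⟨n, hn⟩ := mem_iUnion.1 (hMC γ hxγ)
  exact (subset_biUnion_of_mem (u := A) hn).trans
    (subset_iUnion (fun n => ⋃ γ ∈ {γ | x ∈ C γ n}, A γ) n)

variable [SecondCountableTopology Y]

theorem isMeagre_iUnion_of_forall_biUnion_Iic [LinearOrder Γ]
    (hA : ∀ y, {γ | y ∈ A γ}.Finite)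
    (hBP : ∀ Θ : Set Γ, BaireMeasurableSet (⋃ γ ∈ Θ, A γ))
    (h : ∀ γ, IsMeagre (⋃ β ∈ Iic γ, A β)) : IsMeagre (⋃ γ, A γ) := by
  have h_section := eventually_isMeagre_biUnion h hA hBP
  by_contra hE
  obtain ⟨x, hx, hxE⟩ : ∃ x, IsMeagre (⋃ γ ∈ {γ | x ∈ ⋃ β ∈ Iic γ, A β}, A γ) ∧
      x ∈ ⋃ γ, A γ := by
    by_contra! hdisj
    exact hE (mem_of_superset h_section hdisj)
  obtain ⟨β, hxβ⟩ := mem_iUnion.1 hxE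
  refine hE (((h β).union hx).mono fun y hy => ?_)
  obtain ⟨γ, hyγ⟩ := mem_iUnion.1 hy
  rcases le_total γ β with hγβ | hβγ
  · exact Or.inl (mem_iUnion₂.2 ⟨γ, hγβ, hyγ⟩)
  · exact Or.inr (mem_iUnion₂.2 ⟨γ, mem_iUnion₂.2 ⟨β, hβγ, hxβ⟩, hyγ⟩)

theorem isMeagre_biUnion_Iic [LinearOrder Γ] [WellFoundedLT Γ]
    (hA : ∀ y, {γ | y ∈ A γ}.Finite)
    (hBP : ∀ Θ : Set Γ, BaireMeasurableSet (⋃ γ ∈ Θ, A γ))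
    (hm : ∀ γ, IsMeagre (A γ)) (α : Γ) : IsMeagre (⋃ β ∈ Iic α, A β) := by
  induction α using WellFoundedLT.induction with
  | ind α ih =>
    have h_Iio : IsMeagre (⋃ β : Iio α, A β) := by
      refine isMeagre_iUnion_of_forall_biUnion_Iic
        (fun y => (hA y).preimage Subtype.val_injective.injOn) (fun Θ => ?_) fun γ => ?_
      · rw [← biUnion_image (g := A)]
        exact hBP _
      · exact (ih γ γ.2).mono
          (iUnion₂_subset fun β hβ => subset_biUnion_of_mem (u := A) (mem_Iic.2 hβ))
    rw [← Iio_insert, biUnion_insert, biUnion_eq_iUnion]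
    exact (hm α).union h_Iio

theorem isMeagre_iUnion_of_pointFinite (hA : ∀ y, {γ | y ∈ A γ}.Finite)
    (hBP : ∀ Θ : Set Γ, BaireMeasurableSet (⋃ γ ∈ Θ, A γ))
    (hm : ∀ γ, IsMeagre (A γ)) : IsMeagre (⋃ γ, A γ) := by
  obtain ⟨_, _⟩ := exists_wellFoundedLT Γ
  exact isMeagre_iUnion_of_forall_biUnion_Iic hA hBP (isMeagre_biUnion_Iic hA hBP hm)

end PointFinite

/-- **Prikry's Proposition (Baire part).** A point-finite family of meager sets
whose union is non-meager admits a subunion without the Baire property. -/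
theorem pointFinite_meager_family_nonBaire_subunion {Y : Type*}
    [TopologicalSpace Y] [SecondCountableTopology Y]
    {Γ : Type*} (A : Γ → Set Y)
    (hpf : ∀ x : Y, {γ : Γ | x ∈ A γ}.Finite)
    (hmeager : ∀ γ, IsMeagre (A γ)) (hE : ¬ IsMeagre (⋃ γ, A γ)) :
    ∃ Θ : Set Γ, ¬ HasBaireProperty (⋃ γ ∈ Θ, A γ) := by
  by_contra! hBP
  exact hE (isMeagre_iUnion_of_pointFinite hpf (fun Θ => (hBP Θ).baireMeasurableSet) hmeager)
end

section
/- Let Y be a second countable topological space equipped with a finite, outer regular Borel measure μ, and let {A_γ : γ ∈ Γ} be a point-finite family of subsets of Y with μ*(A_γ) = 0 for every γ. If the outer measure of the union E = ⋃_{γ∈Γ} A_γ satisfies μ*(E) > 0, then there exists Θ ⊆ Γ such that there is no null-measurable set C ⊆ Y (measurable with respect to the completion of μ) with C ∩ E = ⋃_{γ∈Θ} A_γ. -/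
open MeasureTheory

/-!
Suppose every subunion is the trace on `E` of a null-measurable set. The key step is a Fubini
argument: if the sets `N γ` are null, then so is `⋃ γ, A γ ×ˢ N γ`. Indeed, cover `N γ` by an open
set `U γ` of measure at most `ε`. Expanding the sets `U γ` in a countable basis `B` shows that
`⋃ γ, A γ ×ˢ U γ` is the trace of the null-measurable set `⋃ b ∈ B, C b ×ˢ b`, where `C b` cuts out
the subunion of the `A γ` with `b ⊆ U γ`. By point-finiteness its section at `x ∈ E` has measure at
most `n x * ε`, with `n x` finite and independent of `ε`.

Now well-order the index set. If all initial subunions are null, take `N γ = ⋃ β ≤ γ, A β`: then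
`E ×ˢ E` is covered by a null set and its reflection across the diagonal, so `E` is null.
Transfinite induction shows that all initial subunions are null.
-/

open Set Filter Topology
open scoped ENNReal

section Product

variable {X Z Γ : Type*} [MeasurableSpace Z] {ν : Measure Z}

theorem measure_prod_inter_preimage_fst_eq_zero [MeasurableSpace X] {μ : Measure X} [SFinite ν]
    {W : Set (X × Z)} (hW : NullMeasurableSet W (μ.prod ν)) {s : Set X}
    (hs : ∀ x ∈ s, ν (Prod.mk x ⁻¹' W) = 0) :
    μ.prod ν (W ∩ Prod.fst ⁻¹' s) = 0 := by
  obtain ⟨V, hVW, hV, hVW_ae⟩ := hW.exists_measurable_subset_ae_eq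
  let T : Set X := {x | ν (Prod.mk x ⁻¹' V) = 0}
  have hT : MeasurableSet T := measurable_measure_prodMk_left hV (measurableSet_singleton 0)
  have hVT : μ.prod ν (V ∩ Prod.fst ⁻¹' T) = 0 := by
    rw [Measure.measure_prod_null (hV.inter (measurable_fst hT))]
    refine .of_forall fun x ↦ ?_
    by_cases hx : x ∈ T
    · exact measure_mono_null (preimage_mono inter_subset_left) hx
    · simp [preimage_preimage, hx]
  have hdiff : μ.prod ν (W \ V) = 0 := ae_le_set.1 hVW_ae.symm.le
  refine measure_mono_null ?_ (measure_union_null hVT hdiff)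
  rintro ⟨x, z⟩ ⟨hxz, hx⟩
  by_cases hV' : (x, z) ∈ V
  · exact .inl ⟨hV', measure_mono_null (preimage_mono hVW) (hs x hx)⟩
  · exact .inr ⟨hxz, hV'⟩

theorem measure_preimage_prodMk_iUnion_prod_le {A : Γ → Set X} {U : Γ → Set Z} {ε : ℝ≥0∞}
    (hU : ∀ γ, ν (U γ) ≤ ε) {x : X} (hx : {γ | x ∈ A γ}.Finite) :
    ν (Prod.mk x ⁻¹' ⋃ γ, A γ ×ˢ U γ) ≤ hx.toFinset.card * ε := by
  have hsection : Prod.mk x ⁻¹' (⋃ γ, A γ ×ˢ U γ) = ⋃ γ ∈ hx.toFinset, U γ := by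
    ext z
    simp
  calc ν (Prod.mk x ⁻¹' ⋃ γ, A γ ×ˢ U γ)
      ≤ ∑ γ ∈ hx.toFinset, ν (U γ) := hsection ▸ measure_biUnion_finset_le _ _
    _ ≤ hx.toFinset.card * ε := by
      simpa only [nsmul_eq_mul] using Finset.sum_le_card_nsmul _ _ _ fun γ _ ↦ hU γ

end Product

/-- Every subunion of the family `A` is the trace on the full union of a `μ`-null-measurable set.
The theorem is proved by refuting this property. -/
def HasNullMeasurableTraces {X Γ : Type*} [MeasurableSpace X] (μ : Measure X)
    (A : Γ → Set X) : Prop :=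
  ∀ Θ : Set Γ, ∃ C : Set X, NullMeasurableSet C μ ∧ C ∩ (⋃ γ, A γ) = ⋃ γ ∈ Θ, A γ

namespace HasNullMeasurableTraces

section Product

variable {X Z Γ Δ : Type*} [MeasurableSpace X] {μ : Measure X} {A : Γ → Set X}

theorem comp (hA : HasNullMeasurableTraces μ A) (f : Δ → Γ) :
    HasNullMeasurableTraces μ (A ∘ f) := by
  intro Θ
  obtain ⟨C, hC, hCA⟩ := hA (f '' Θ)
  have hsub : ⋃ δ, (A ∘ f) δ ⊆ ⋃ γ, A γ := iUnion_subset fun δ ↦ subset_iUnion A (f δ)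
  refine ⟨C, hC, ?_⟩
  calc C ∩ ⋃ δ, (A ∘ f) δ
      = (C ∩ ⋃ γ, A γ) ∩ ⋃ δ, (A ∘ f) δ := by rw [inter_assoc, inter_eq_right.2 hsub]
    _ = (⋃ δ ∈ Θ, (A ∘ f) δ) ∩ ⋃ δ, (A ∘ f) δ := by rw [hCA, biUnion_image]; rfl
    _ = ⋃ δ ∈ Θ, (A ∘ f) δ := inter_eq_left.2 (iUnion₂_subset_iUnion _ _)

variable [TopologicalSpace Z] [SecondCountableTopology Z] [MeasurableSpace Z]
  [OpensMeasurableSpace Z]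

theorem exists_nullMeasurableSet_prod (hA : HasNullMeasurableTraces μ A) (ν : Measure Z)
    {U : Γ → Set Z} (hU : ∀ γ, IsOpen (U γ)) :
    ∃ W, NullMeasurableSet W (μ.prod ν) ∧
      W ∩ Prod.fst ⁻¹' (⋃ γ, A γ) = ⋃ γ, A γ ×ˢ U γ := by
  let B := TopologicalSpace.countableBasis Z
  have hB : TopologicalSpace.IsTopologicalBasis B := TopologicalSpace.isBasis_countableBasis Z
  choose C hC hCA using fun b : Set Z ↦ hA {γ | b ⊆ U γ}
  have hC_mem {x : X} (hx : x ∈ ⋃ γ, A γ) (b : Set Z) : x ∈ C b ↔ ∃ γ, b ⊆ U γ ∧ x ∈ A γ := by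
    simpa [mem_iUnion.1 hx] using Set.ext_iff.1 (hCA b) x
  refine ⟨⋃ b ∈ B, C b ×ˢ b, .biUnion (TopologicalSpace.countable_countableBasis Z) fun b hb ↦
    (hC b).prod (hB.isOpen hb).measurableSet.nullMeasurableSet, ?_⟩
  ext ⟨x, z⟩
  simp only [mem_inter_iff, mem_preimage, mem_iUnion₂, mem_prod, exists_prop]
  constructor
  · rintro ⟨⟨b, -, hxb, hzb⟩, hx⟩
    obtain ⟨γ, hbγ, hxγ⟩ := (hC_mem hx b).1 hxb
    exact mem_iUnion.2 ⟨γ, hxγ, hbγ hzb⟩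
  · intro hxz
    obtain ⟨γ, hxγ, hzγ⟩ := mem_iUnion.1 hxz
    obtain ⟨b, hb, hzb, hbγ⟩ := hB.exists_subset_of_mem_open hzγ (hU γ)
    have hx : x ∈ ⋃ γ, A γ := mem_iUnion_of_mem γ hxγ
    exact ⟨⟨b, hb, (hC_mem hx b).2 ⟨γ, hbγ, hxγ⟩, hzb⟩, hx⟩

theorem measure_prod_iUnion_prod_eq_zero (hA : HasNullMeasurableTraces μ A)
    (hpf : ∀ x, {γ | x ∈ A γ}.Finite) {ν : Measure Z} [SFinite ν] [ν.OuterRegular]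
    {N : Γ → Set Z} (hN : ∀ γ, ν (N γ) = 0) :
    μ.prod ν (⋃ γ, A γ ×ˢ N γ) = 0 := by
  obtain ⟨ε, -, hε, hε_lim⟩ := exists_seq_strictAnti_tendsto' (zero_lt_one (α := ℝ≥0∞))
  have hcover (k : ℕ) (γ : Γ) : ∃ U ⊇ N γ, IsOpen U ∧ ν U < ε k :=
    (N γ).exists_isOpen_lt_of_lt _ ((hN γ).trans_lt (hε k).1)
  choose U hNU hU hUε using hcover
  choose W hW hWU using fun k ↦ hA.exists_nullMeasurableSet_prod ν (hU k)
  have hsection : ∀ x ∈ ⋃ γ, A γ, ν (Prod.mk x ⁻¹' ⋂ k, W k) = 0 := by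
    intro x hx
    have hle (k : ℕ) : ν (Prod.mk x ⁻¹' ⋂ k, W k) ≤ (hpf x).toFinset.card * ε k := by
      refine le_trans (measure_mono fun z hz ↦ ?_)
        (measure_preimage_prodMk_iUnion_prod_le (fun γ ↦ (hUε k γ).le) (hpf x))
      exact (hWU k).subset ⟨mem_iInter.1 hz k, hx⟩
    have hlim : Tendsto (fun k ↦ ((hpf x).toFinset.card : ℝ≥0∞) * ε k) atTop (𝓝 0) := by
      simpa using ENNReal.Tendsto.const_mul hε_lim (.inr (ENNReal.natCast_ne_top _))
    exact le_antisymm (ge_of_tendsto' hlim hle) zero_le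
  refine measure_mono_null (fun p hp ↦ ?_)
    (measure_prod_inter_preimage_fst_eq_zero (.iInter hW) hsection)
  have hpW (k : ℕ) : p ∈ W k ∩ Prod.fst ⁻¹' ⋃ γ, A γ :=
    (hWU k).superset (iUnion_mono (fun γ ↦ prod_mono_right (hNU k γ)) hp)
  exact ⟨mem_iInter.2 fun k ↦ (hpW k).1, (hpW 0).2⟩

end Product

section OuterRegular

variable {Y Γ : Type*} [TopologicalSpace Y] [SecondCountableTopology Y] [MeasurableSpace Y]
  [OpensMeasurableSpace Y] {μ : Measure Y} [SFinite μ] [μ.OuterRegular] {A : Γ → Set Y}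

theorem measure_iUnion_eq_zero_of_Iic [LinearOrder Γ] (hA : HasNullMeasurableTraces μ A)
    (hpf : ∀ x, {γ | x ∈ A γ}.Finite) (hIic : ∀ γ, μ (⋃ β ∈ Iic γ, A β) = 0) :
    μ (⋃ γ, A γ) = 0 := by
  let R : Set (Y × Y) := ⋃ γ, A γ ×ˢ ⋃ β ∈ Iic γ, A β
  have hR : μ.prod μ R = 0 := hA.measure_prod_iUnion_prod_eq_zero hpf hIic
  have hR_swap : μ.prod μ (Prod.swap ⁻¹' R) = 0 :=
    Measure.measurePreserving_swap.quasiMeasurePreserving.preimage_null hR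
  have hcover : (⋃ γ, A γ) ×ˢ (⋃ γ, A γ) ⊆ R ∪ Prod.swap ⁻¹' R := by
    rintro ⟨x, y⟩ ⟨hx, hy⟩
    obtain ⟨α, hxα⟩ := mem_iUnion.1 hx
    obtain ⟨β, hyβ⟩ := mem_iUnion.1 hy
    rcases le_total β α with hβα | hαβ
    · exact .inl (mem_iUnion.2 ⟨α, hxα, mem_biUnion hβα hyβ⟩)
    · exact .inr (mem_iUnion.2 ⟨β, hyβ, mem_biUnion hαβ hxα⟩)
  have hsq : μ (⋃ γ, A γ) * μ (⋃ γ, A γ) = 0 := by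
    rw [← Measure.prod_prod]
    exact measure_mono_null hcover (measure_union_null hR hR_swap)
  exact mul_self_eq_zero.1 hsq

theorem measure_biUnion_Iic_eq_zero [LinearOrder Γ] [WellFoundedLT Γ]
    (hA : HasNullMeasurableTraces μ A) (hpf : ∀ x, {γ | x ∈ A γ}.Finite)
    (hnull : ∀ γ, μ (A γ) = 0) (γ : Γ) : μ (⋃ β ∈ Iic γ, A β) = 0 := by
  induction γ using WellFoundedLT.induction with
  | ind γ ih =>
    have hIic (α : Iio γ) : μ (⋃ β ∈ Iic α, A β) = 0 :=
      measure_mono_null (iUnion₂_subset fun _ hβ ↦ subset_biUnion_of_mem (u := A) hβ)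
        (ih α α.2)
    have hIio : μ (⋃ β : Iio γ, A β) = 0 :=
      (hA.comp Subtype.val).measure_iUnion_eq_zero_of_Iic
        (fun x ↦ (hpf x).preimage Subtype.val_injective.injOn) hIic
    rw [← Iio_insert, biUnion_insert, biUnion_eq_iUnion]
    exact measure_union_null (hnull γ) hIio

theorem measure_iUnion_eq_zero (hA : HasNullMeasurableTraces μ A)
    (hpf : ∀ x, {γ | x ∈ A γ}.Finite) (hnull : ∀ γ, μ (A γ) = 0) : μ (⋃ γ, A γ) = 0 := by
  obtain ⟨_, _⟩ := exists_wellFoundedLT Γ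
  exact hA.measure_iUnion_eq_zero_of_Iic hpf (hA.measure_biUnion_Iic_eq_zero hpf hnull)

end OuterRegular

end HasNullMeasurableTraces

theorem pointFinite_null_family_no_measurable_trace_general {Y : Type*}
    [TopologicalSpace Y] [SecondCountableTopology Y] [MeasurableSpace Y]
    [OpensMeasurableSpace Y] (μ : Measure Y) [SFinite μ] [μ.OuterRegular]
    {Γ : Type*} (A : Γ → Set Y)
    (hpf : ∀ x : Y, {γ : Γ | x ∈ A γ}.Finite)
    (hnull : ∀ γ, μ (A γ) = 0) (hE : 0 < μ (⋃ γ, A γ)) :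
    ∃ Θ : Set Γ, ¬ ∃ C : Set Y, NullMeasurableSet C μ ∧
      C ∩ (⋃ γ, A γ) = ⋃ γ ∈ Θ, A γ := by
  have hA : ¬ HasNullMeasurableTraces μ A := fun hA ↦
    hE.ne' (hA.measure_iUnion_eq_zero hpf hnull)
  exact not_forall.1 hA

/-- **Theorem 6.2 (measure case).** For a point-finite family of outer-null sets
whose union `E` has positive outer measure, some subunion is not the trace on `E`
of any μ-measurable set. -/
theorem pointFinite_null_family_no_measurable_trace {Y : Type*}
    [TopologicalSpace Y] [SecondCountableTopology Y] [MeasurableSpace Y]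
    [BorelSpace Y] (μ : Measure Y) [IsFiniteMeasure μ] [μ.OuterRegular]
    {Γ : Type*} (A : Γ → Set Y)
    (hpf : ∀ x : Y, {γ : Γ | x ∈ A γ}.Finite)
    (hnull : ∀ γ, μ (A γ) = 0) (hE : 0 < μ (⋃ γ, A γ)) :
    ∃ Θ : Set Γ, ¬ ∃ C : Set Y, NullMeasurableSet C μ ∧
      C ∩ (⋃ γ, A γ) = ⋃ γ ∈ Θ, A γ :=
  pointFinite_null_family_no_measurable_trace_general μ A hpf hnull hE
end

section
/- Let Y be a second countable topological space and let {A_γ : γ ∈ Γ} be a point-finite family of meager subsets of Y. If the union E = ⋃_{γ∈Γ} A_γ is non-meager, then there exists Θ ⊆ Γ such that there is no set C ⊆ Y having the Baire property with C ∩ E = ⋃_{γ∈Θ} A_γ. -/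
/-!
Suppose that every subunion of `A` is the trace on `E = ⋃ γ, A γ` of a set with the Baire property.
Given open sets `G γ`, the set of pairs `(x, y)` such that `x ∈ G γ` and `y ∈ A γ` for some `γ` then
agrees, for all `y ∈ E` outside a meager set, with an open subset of the product: it is the union,
over a countable base, of the rectangles with sides a basic set `k` and the subunion of those `A γ`
with `k ⊆ G γ`. The Kuratowski–Ulam argument applies to this open set. Taking for `G γ` complements
of closed nowhere dense sets and using point-finiteness, it follows that for meager `B γ`, almost
every `x` has the property that almost every `y ∈ E` lies in some `A γ` with `x ∉ B γ`.

Now well-order the indices, truncated so that the initial subunions `B γ = ⋃ δ < γ, A δ` are meager.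
If `E` were non-meager, some `x ∈ A δ` would have this property. Since `x ∉ B γ` forces `γ ≤ δ`,
almost all of `E` would lie in the meager set `⋃ γ ≤ δ, A γ`.
-/

open Set Filter TopologicalSpace

section Category

variable {X Y : Type*} [TopologicalSpace X] [TopologicalSpace Y]

lemma isNowhereDense_union_iff {s t : Set X} :
    IsNowhereDense (s ∪ t) ↔ IsNowhereDense s ∧ IsNowhereDense t := by
  refine ⟨fun h ↦ ⟨h.mono subset_union_left, h.mono subset_union_right⟩, fun ⟨hs, ht⟩ ↦ ?_⟩
  rw [IsNowhereDense, closure_union,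
    interior_union_isClosed_of_interior_empty isClosed_closure ht, hs]

lemma exists_monotone_isNowhereDense_of_isMeagre {s : Set X} (hs : IsMeagre s) :
    ∃ N : ℕ → Set X, Monotone N ∧ (∀ n, IsNowhereDense (N n)) ∧ s ⊆ ⋃ n, N n := by
  obtain ⟨S, hS, hScount, hsS⟩ := isMeagre_iff_countable_union_isNowhereDense.1 hs
  obtain ⟨f, hf⟩ := (hScount.insert ∅).exists_eq_range (insert_nonempty ∅ S)
  have hf_nowhereDense (n : ℕ) : IsNowhereDense (f n) := by
    rcases hf ▸ mem_range_self n with h | h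
    · exact h ▸ isNowhereDense_empty
    · exact hS _ h
  refine ⟨partialSups f, (partialSups f).monotone, fun n ↦ ?_, hsS.trans ?_⟩
  · exact (partialSups_iff_forall _ isNowhereDense_union_iff).2 fun k _ ↦ hf_nowhereDense k
  · calc ⋃₀ S ⊆ ⋃₀ range f := sUnion_subset_sUnion (hf ▸ subset_insert ∅ S)
      _ = ⋃ n, f n := sUnion_range f
      _ = ⋃ n, partialSups f n := (iSup_partialSups_eq f).symm

-- A Kuratowski–Ulam theorem relative to `F`, which need not have the Baire property.
lemma eventually_residual_isNowhereDense_diff_slice [SecondCountableTopology Y]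
    {V : Set (X × Y)} (hV : IsOpen V) {F : Set Y} (hF : ∀ y ∈ F, Dense {x | (x, y) ∈ V}) :
    ∀ᶠ x in residual X, IsNowhereDense (F \ {y | (x, y) ∈ V}) := by
  have hbasis := isBasis_countableBasis Y
  have hmeets : ∀ᶠ x in residual X, ∀ b ∈ countableBasis Y, (F ∩ b).Nonempty →
      ∃ y ∈ b, (x, y) ∈ V := by
    simp only [eventually_countable_ball (countable_countableBasis Y), eventually_imp_distrib_left]
    rintro b - ⟨y, hyF, hyb⟩
    have hopen : IsOpen {x | (x, y) ∈ V} := hV.preimage (by fun_prop)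
    filter_upwards [residual_of_dense_open hopen (hF y hyF)] with x hx using ⟨y, hyb, hx⟩
  filter_upwards [hmeets] with x hx
  have hopen : IsOpen {y | (x, y) ∈ V} := hV.preimage (by fun_prop)
  rw [isNowhereDense_iff_forall_notMem_nhds]
  rintro y ⟨hyF, -⟩ hy_nhds
  obtain ⟨b, hb, hyb, hb_closure⟩ := hbasis.mem_nhds_iff.1 hy_nhds
  obtain ⟨w, hwb, hwV⟩ := hx b hb ⟨y, hyF, hyb⟩
  obtain ⟨v, hvV, -, hvV'⟩ := mem_closure_iff.1 (hb_closure hwb) _ hopen hwV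
  exact hvV' hvV

lemma HasBaireProperty.exists_isOpen_eventually_mem_iff {s : Set X} (hs : HasBaireProperty s) :
    ∃ U, IsOpen U ∧ ∀ᶠ x in residual X, x ∈ s ↔ x ∈ U := by
  obtain ⟨U, hU, hsU⟩ := hs
  refine ⟨U, hU, ?_⟩
  filter_upwards [hsU] with x hx
  simp only [mem_compl_iff, mem_symmDiff] at hx
  tauto

end Category

/-- A family of sets is Baire additive if each of its subunions is the trace, on the union of the
whole family, of a set with the Baire property. The union itself need not have the Baire property,
so this is weaker than asking that every subunion have it. -/
def IsBaireAdditive {Y Γ : Type*} [TopologicalSpace Y] (A : Γ → Set Y) : Prop :=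
  ∀ Θ : Set Γ, ∃ C, HasBaireProperty C ∧ C ∩ (⋃ γ, A γ) = ⋃ γ ∈ Θ, A γ

namespace IsBaireAdditive

variable {X Y Γ : Type*} [TopologicalSpace X] [TopologicalSpace Y] {A : Γ → Set Y}

lemma comp {Δ : Type*} (hA : IsBaireAdditive A) (f : Δ → Γ) : IsBaireAdditive (A ∘ f) := by
  intro Θ
  obtain ⟨C, hC, hCΘ⟩ := hA (f '' Θ)
  rw [biUnion_image] at hCΘ
  have hcomp : ⋃ δ, A (f δ) ⊆ ⋃ γ, A γ := iSup_comp_le A f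
  refine ⟨C, hC, ?_⟩
  calc C ∩ ⋃ δ, A (f δ) = C ∩ (⋃ γ, A γ) ∩ ⋃ δ, A (f δ) := by
        rw [inter_assoc, inter_eq_right.2 hcomp]
    _ = ⋃ δ ∈ Θ, A (f δ) := by
        rw [hCΘ, inter_eq_left.2 (iUnion₂_subset_iUnion (· ∈ Θ) fun δ ↦ A (f δ))]

lemma exists_isOpen_prod [SecondCountableTopology X] (hA : IsBaireAdditive A) {G : Γ → Set X}
    (hG : ∀ γ, IsOpen (G γ)) :
    ∃ V : Set (X × Y), IsOpen V ∧
      ∀ᶠ y in residual Y, y ∈ ⋃ γ, A γ → ∀ x, (x, y) ∈ V ↔ ∃ γ, x ∈ G γ ∧ y ∈ A γ := by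
  have hbasis := isBasis_countableBasis X
  choose C hC hC_trace using fun k : Set X ↦ hA {γ | k ⊆ G γ}
  choose U hU hCU using fun k ↦ (hC k).exists_isOpen_eventually_mem_iff
  refine ⟨⋃ k ∈ countableBasis X, k ×ˢ U k,
    isOpen_biUnion fun k hk ↦ (hbasis.isOpen hk).prod (hU k), ?_⟩
  have hCU_all : ∀ᶠ y in residual Y, ∀ k ∈ countableBasis X, y ∈ C k ↔ y ∈ U k :=
    (eventually_countable_ball (countable_countableBasis X)).2 fun k _ ↦ hCU k
  filter_upwards [hCU_all] with y hy hyA x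
  have mem_U_iff (k : Set X) (hk : k ∈ countableBasis X) :
      y ∈ U k ↔ ∃ γ, k ⊆ G γ ∧ y ∈ A γ := by
    have hy_trace := Set.ext_iff.1 (hC_trace k) y
    simpa only [mem_inter_iff, hyA, and_true, hy k hk, mem_iUnion₂, mem_ofPred_eq, exists_prop]
      using hy_trace
  simp only [mem_iUnion₂, mem_prod, exists_prop]
  constructor
  · rintro ⟨k, hk, hxk, hyU⟩
    obtain ⟨γ, hkG, hyγ⟩ := (mem_U_iff k hk).1 hyU
    exact ⟨γ, hkG hxk, hyγ⟩
  · rintro ⟨γ, hxG, hyγ⟩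
    obtain ⟨k, hk, hxk, hkG⟩ := hbasis.exists_subset_of_mem_open hxG (hG γ)
    exact ⟨k, hk, hxk, (mem_U_iff k hk).2 ⟨γ, hkG, hyγ⟩⟩

variable [SecondCountableTopology X] [SecondCountableTopology Y]

lemma eventually_exists_notMem_of_isNowhereDense (hA : IsBaireAdditive A) {N : Γ → Set X}
    (hN : ∀ γ, IsNowhereDense (N γ)) :
    ∀ᶠ x in residual X, ∀ᶠ y in residual Y, y ∈ ⋃ γ, A γ → ∃ γ, x ∉ N γ ∧ y ∈ A γ := by
  obtain ⟨V, hV, hV_iff⟩ :=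
    hA.exists_isOpen_prod (G := fun γ ↦ (closure (N γ))ᶜ) fun γ ↦ isClosed_closure.isOpen_compl
  let F := {y ∈ ⋃ γ, A γ | ∀ x, (x, y) ∈ V ↔ ∃ γ, x ∈ (closure (N γ))ᶜ ∧ y ∈ A γ}
  have hF : ∀ y ∈ F, Dense {x | (x, y) ∈ V} := by
    rintro y ⟨hyA, hyV⟩
    obtain ⟨γ, hyγ⟩ := mem_iUnion.1 hyA
    exact (interior_eq_empty_iff_dense_compl.1 (hN γ)).mono fun x hx ↦ (hyV x).2 ⟨γ, hx, hyγ⟩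
  filter_upwards [eventually_residual_isNowhereDense_diff_slice hV hF] with x hx
  filter_upwards [hV_iff, hx.isMeagre] with y hyV hyF hyA
  have hxyV : (x, y) ∈ V := by
    by_contra hxyV
    exact hyF ⟨⟨hyA, hyV hyA⟩, hxyV⟩
  obtain ⟨γ, hxγ, hyγ⟩ := (hyV hyA x).1 hxyV
  exact ⟨γ, notMem_subset subset_closure hxγ, hyγ⟩

lemma eventually_exists_notMem_of_isMeagre (hA : IsBaireAdditive A)
    (hfin : ∀ y, {γ | y ∈ A γ}.Finite) {B : Γ → Set X} (hB : ∀ γ, IsMeagre (B γ)) :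
    ∀ᶠ x in residual X, ∀ᶠ y in residual Y, y ∈ ⋃ γ, A γ → ∃ γ, x ∉ B γ ∧ y ∈ A γ := by
  choose N hN_mono hN hBN using fun γ ↦ exists_monotone_isNowhereDense_of_isMeagre (hB γ)
  have hN_generic : ∀ᶠ x in residual X, ∀ n, ∀ᶠ y in residual Y,
      y ∈ ⋃ γ, A γ → ∃ γ, x ∉ N γ n ∧ y ∈ A γ :=
    eventually_countable_forall.2 fun n ↦
      hA.eventually_exists_notMem_of_isNowhereDense fun γ ↦ hN γ n
  filter_upwards [hN_generic] with x hx
  filter_upwards [eventually_countable_forall.2 hx] with y hy hyA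
  by_contra! hcovered
  have hx_eventually (γ : Γ) (hyγ : y ∈ A γ) : ∀ᶠ n in atTop, x ∈ N γ n := by
    have hxB : x ∈ B γ := by_contra fun hxB ↦ hcovered γ hxB hyγ
    obtain ⟨m, hm⟩ := mem_iUnion.1 (hBN γ hxB)
    filter_upwards [eventually_ge_atTop m] with n hmn using hN_mono γ hmn hm
  obtain ⟨n, hn⟩ := ((eventually_all_finite (hfin y)).2 hx_eventually).exists
  obtain ⟨γ, hxN, hyγ⟩ := hy n hyA
  exact hxN (hn γ hyγ)

lemma isMeagre_iUnion_of_forall_Iic [LinearOrder Γ] (hA : IsBaireAdditive A)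
    (hfin : ∀ y, {γ | y ∈ A γ}.Finite) (hIic : ∀ γ, IsMeagre (⋃ δ ∈ Iic γ, A δ)) :
    IsMeagre (⋃ γ, A γ) := by
  by_contra hE
  have hIio (γ : Γ) : IsMeagre (⋃ δ ∈ Iio γ, A δ) :=
    (hIic γ).mono (biUnion_subset_biUnion_left Iio_subset_Iic_self)
  have hgeneric := hA.eventually_exists_notMem_of_isMeagre hfin hIio
  obtain ⟨x, hxA, hx⟩ : ∃ x ∈ ⋃ γ, A γ,
      ∀ᶠ y in residual Y, y ∈ ⋃ γ, A γ → ∃ γ, x ∉ ⋃ δ ∈ Iio γ, A δ ∧ y ∈ A γ := by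
    by_contra hnone
    exact hE (hgeneric.mono fun x hx hxA ↦ hnone ⟨x, hxA, hx⟩)
  obtain ⟨δ, hxδ⟩ := mem_iUnion.1 hxA
  apply hE
  filter_upwards [hx, hIic δ] with y hy hyδ hyA
  obtain ⟨γ, hxγ, hyγ⟩ := hy hyA
  have hγδ : γ ≤ δ := not_lt.1 fun hδγ ↦ hxγ (mem_biUnion hδγ hxδ)
  exact hyδ (mem_biUnion hγδ hyγ)

end IsBaireAdditive

lemma exists_not_and_forall_mem_Iio {Γ : Type*} [Preorder Γ] [WellFoundedLT Γ]
    {P : Set Γ → Prop} (hP : ¬ P univ) : ∃ S, ¬ P S ∧ ∀ γ ∈ S, P (Iio γ) := by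
  by_cases hIio : ∀ γ, P (Iio γ)
  · exact ⟨univ, hP, fun γ _ ↦ hIio γ⟩
  · obtain ⟨γ, hγ, hγ_min⟩ :=
      wellFounded_lt.has_min {γ | ¬ P (Iio γ)} (not_forall.1 hIio)
    exact ⟨Iio γ, hγ, fun δ hδγ ↦ not_not.1 fun hδ ↦ hγ_min δ hδ hδγ⟩

theorem IsBaireAdditive.isMeagre_iUnion {Y Γ : Type*} [TopologicalSpace Y]
    [SecondCountableTopology Y] {A : Γ → Set Y} (hA : IsBaireAdditive A)
    (hfin : ∀ y, {γ | y ∈ A γ}.Finite) (hmeagre : ∀ γ, IsMeagre (A γ)) :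
    IsMeagre (⋃ γ, A γ) := by
  by_contra hE
  obtain ⟨_, _⟩ := exists_wellFoundedLT Γ
  obtain ⟨S, hS, hIio⟩ := exists_not_and_forall_mem_Iio
    (P := fun S : Set Γ ↦ IsMeagre (⋃ γ ∈ S, A γ)) (by rwa [biUnion_univ])
  have hIic (γ : S) : IsMeagre (⋃ δ ∈ Iic γ, A δ) := by
    refine ((hmeagre γ).union (hIio γ γ.2)).mono (iUnion₂_subset fun δ hδγ ↦ ?_)
    rcases (mem_Iic.1 hδγ).eq_or_lt with rfl | hδγ
    · exact subset_union_left
    · exact subset_union_of_subset_right (subset_biUnion_of_mem (s := Iio γ.1) (u := A) hδγ) _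
  apply hS
  rw [biUnion_eq_iUnion]
  exact (hA.comp Subtype.val).isMeagre_iUnion_of_forall_Iic
    (fun y ↦ (hfin y).preimage Subtype.val_injective.injOn) hIic

/-- **Theorem 6.2 (Baire case).** For a point-finite family of meager sets whose
union `E` is non-meager, some subunion is not the trace on `E` of any set with
the Baire property. -/
theorem pointFinite_meager_family_no_baire_trace {Y : Type*}
    [TopologicalSpace Y] [SecondCountableTopology Y]
    {Γ : Type*} (A : Γ → Set Y)
    (hpf : ∀ x : Y, {γ : Γ | x ∈ A γ}.Finite)
    (hmeager : ∀ γ, IsMeagre (A γ)) (hE : ¬ IsMeagre (⋃ γ, A γ)) :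
    ∃ Θ : Set Γ, ¬ ∃ C : Set Y, HasBaireProperty C ∧
      C ∩ (⋃ γ, A γ) = ⋃ γ ∈ Θ, A γ := by
  by_contra! hA : IsBaireAdditive A
  exact hE (hA.isMeagre_iUnion hpf hmeager)
end
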